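/- arXiv:1402.2371 — 5 statements merged into one kernel-verified Lean document; each statement's English description precedes it below -/
import Mathlib

section
/- Let 𝔽 be an algebraically closed field and let X ⊆ ℙⁿ(𝔽) be an irreducible nondegenerate projective variety. Let r_max be the maximum value of X-rank over nonzero vectors of 𝔽^{n+1} and let r_gen be the generic X-rank. Then r_max ≤ 2·r_gen. -/
/-!
Every vector is a sum of two generic ones. The open dense set `U` of vectors of rank `rgen`
contains a nonempty basic open set `{p ≠ 0}`. For any `v`, the set `{x | p (v - x) ≠ 0}` is again a
nonempty basic open set, and since `F` is infinite the two meet (`exists_ne_zero_and_sub`): there is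
`x` with both `x` and `v - x` in `U`. Concatenating decompositions of `x` and `v - x` writes `v` as a
sum of `2 * rgen` elements of the cone.
-/

open MvPolynomial

/-- The zero locus in affine space `σ → F` of a set `I` of polynomials. -/
def zLocus {F : Type*} [CommSemiring F] {σ : Type*} (I : Set (MvPolynomial σ F)) :
    Set (σ → F) :=
  {x | ∀ p ∈ I, eval x p = 0}

/-- A subset of affine space is Zariski closed if it is the zero locus of a set of
polynomials. -/
def IsZClosed {F : Type*} [CommSemiring F] {σ : Type*} (S : Set (σ → F)) : Prop :=
  ∃ I : Set (MvPolynomial σ F), S = zLocus I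

/-- Zariski open subsets of affine space. -/
def IsZOpen {F : Type*} [CommSemiring F] {σ : Type*} (S : Set (σ → F)) : Prop :=
  IsZClosed Sᶜ

/-- Zariski dense subsets of affine space. -/
def IsZDense {F : Type*} [CommSemiring F] {σ : Type*} (S : Set (σ → F)) : Prop :=
  ∀ C : Set (σ → F), IsZClosed C → S ⊆ C → C = Set.univ

/-- Irreducibility with respect to the Zariski topology. -/
def IsZIrreducible {F : Type*} [CommSemiring F] {σ : Type*} (S : Set (σ → F)) : Prop :=
  S.Nonempty ∧ ∀ C₁ C₂ : Set (σ → F), IsZClosed C₁ → IsZClosed C₂ →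
    S ⊆ C₁ ∪ C₂ → (S ⊆ C₁ ∨ S ⊆ C₂)

/-- An affine cone: a subset closed under scalar multiplication. -/
def IsCone {F : Type*} [CommSemiring F] {σ : Type*} (S : Set (σ → F)) : Prop :=
  ∀ (c : F), ∀ x ∈ S, c • x ∈ S

/-- The set of vectors expressible as a sum of exactly `r` elements of `S`. -/
def sumsOf {F : Type*} [CommSemiring F] {σ : Type*} (S : Set (σ → F)) (r : ℕ) :
    Set (σ → F) :=
  {v | ∃ f : Fin r → (σ → F), (∀ i, f i ∈ S) ∧ ∑ i, f i = v}

/-- The `X`-rank of a vector with respect to the affine cone `S`: the least number of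
elements of `S` summing to it (`⊤` if there is no such decomposition). -/
noncomputable def xRank {F : Type*} [CommSemiring F] {σ : Type*} (S : Set (σ → F))
    (v : σ → F) : ℕ∞ :=
  sInf {r : ℕ∞ | ∃ s : ℕ, r = s ∧ v ∈ sumsOf S s}

/-- The Zariski closure of a subset of affine space. -/
def zClosure {F : Type*} [CommSemiring F] {σ : Type*} (S : Set (σ → F)) : Set (σ → F) :=
  ⋂₀ {C : Set (σ → F) | IsZClosed C ∧ S ⊆ C}

/-- The (affine cone over the) `r`-th secant variety: the Zariski closure of the set of
points of `X`-rank at most `r`. -/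
noncomputable def secantCone {F : Type*} [CommSemiring F] {σ : Type*}
    (Xhat : Set (σ → F)) (r : ℕ) : Set (σ → F) :=
  zClosure {v | xRank Xhat v ≤ (r : ℕ∞)}

/-- Over an infinite field, the nonempty basic open set `{p ≠ 0}` meets its image under the
reflection `x ↦ v - x`. -/
lemma exists_ne_zero_and_sub {F σ : Type*} [Field F] [Infinite F] (p : MvPolynomial σ F)
    (u v : σ → F) (hu : eval u p ≠ 0) : ∃ x, eval x p ≠ 0 ∧ eval (v - x) p ≠ 0 := by
  set q : MvPolynomial σ F := bind₁ (fun i => C (v i) - X i) p with hq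
  have hqe : ∀ x, eval x q = eval (v - x) p := by
    intro x
    rw [hq, ← coe_aeval_eq_eval, ← coe_aeval_eq_eval]
    simp only [RingHom.coe_coe, aeval_bind₁]
    congr 2
    funext i
    simp
  have hp0 : p ≠ 0 := by
    rintro rfl
    simp at hu
  have hq0 : q ≠ 0 := by
    intro h
    have := hqe (v - u)
    rw [h, sub_sub_cancel] at this
    exact hu (by simpa using this.symm)
  by_contra! hcon
  refine mul_ne_zero hp0 hq0 (MvPolynomial.funext fun x => ?_)
  rw [map_mul, hqe, map_zero]
  by_cases h : eval x p = 0
  · rw [h, zero_mul]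
  · rw [hcon x h, mul_zero]

lemma mem_sumsOf_of_xRank_eq {F σ : Type*} [CommSemiring F] {S : Set (σ → F)} {v : σ → F} {r : ℕ}
    (h : xRank S v = r) : v ∈ sumsOf S r := by
  have hne : {r : ℕ∞ | ∃ s : ℕ, r = s ∧ v ∈ sumsOf S s}.Nonempty := by
    by_contra hemp
    rw [Set.not_nonempty_iff_eq_empty] at hemp
    rw [xRank, hemp, sInf_empty] at h
    exact ENat.top_ne_natCast r h
  obtain ⟨s, hs, hv⟩ := csInf_mem hne
  have hrs : (r : ℕ∞) = s := h.symm.trans hs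
  rwa [Nat.cast_inj.mp hrs]

lemma add_mem_sumsOf {F σ : Type*} [CommSemiring F] {S : Set (σ → F)} {v w : σ → F} {r s : ℕ}
    (hv : v ∈ sumsOf S r) (hw : w ∈ sumsOf S s) : v + w ∈ sumsOf S (r + s) := by
  obtain ⟨f, hf, rfl⟩ := hv
  obtain ⟨g, hg, rfl⟩ := hw
  refine ⟨Fin.append f g, fun i => ?_, ?_⟩
  · induction i using Fin.addCases with
    | left i => simpa using hf i
    | right i => simpa using hg i
  · simp [Fin.sum_univ_add]

/-- Theorem 1 of the paper. Over an algebraically closed field, the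
maximum `X`-rank is at most twice the generic `X`-rank. -/
theorem stmt_0 {F : Type*} [Field F] [IsAlgClosed F] {n : ℕ}
    (Xhat : Set (Fin (n + 1) → F))
    (hclosed : IsZClosed Xhat) (hcone : IsCone Xhat)
    (hirr : IsZIrreducible Xhat) (hnondeg : Submodule.span F Xhat = ⊤)
    (rgen : ℕ)
    (hgen : ∃ U : Set (Fin (n + 1) → F), IsZOpen U ∧ IsZDense U ∧
      ∀ v ∈ U, xRank Xhat v = (rgen : ℕ∞))
    (rmax : ℕ∞)
    (hmax : IsGreatest {r : ℕ∞ | ∃ v : Fin (n + 1) → F, v ≠ 0 ∧ xRank Xhat v = r} rmax) :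
    rmax ≤ 2 * (rgen : ℕ∞) := by
  obtain ⟨U, ⟨I, hI⟩, hdense, hU⟩ := hgen
  obtain ⟨⟨v, -, rfl⟩, -⟩ := hmax
  have hUne : U.Nonempty := by
    by_contra hemp
    rw [Set.not_nonempty_iff_eq_empty] at hemp
    have hclosed_empty : IsZClosed (∅ : Set (Fin (n + 1) → F)) := ⟨{1}, by simp [zLocus]⟩
    exact Set.empty_ne_univ (hdense ∅ hclosed_empty hemp.subset)
  obtain ⟨u, hu⟩ := hUne
  have hmem : ∀ x, x ∉ U ↔ ∀ p ∈ I, eval x p = 0 := fun x => by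
    rw [← Set.mem_compl_iff, hI]
    rfl
  obtain ⟨p, hpI, hpu⟩ : ∃ p ∈ I, eval u p ≠ 0 := by
    by_contra! h
    exact (hmem u).mpr h hu
  have hpU : ∀ x, eval x p ≠ 0 → x ∈ U := fun x hx => by
    by_contra hxU
    exact hx ((hmem x).mp hxU p hpI)
  have : Infinite F := inferInstance
  obtain ⟨x, hx, hvx⟩ := exists_ne_zero_and_sub p u v hpu
  have hsum := add_mem_sumsOf (mem_sumsOf_of_xRank_eq (hU _ (hpU _ hx)))
    (mem_sumsOf_of_xRank_eq (hU _ (hpU _ hvx)))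
  rw [add_sub_cancel] at hsum
  exact sInf_le ⟨rgen + rgen, by push_cast; ring, hsum⟩
end

section
/- Let X ⊆ ℙⁿ(ℝ) be an irreducible nondegenerate real projective variety whose real points are Zariski dense. Let r₀ be the minimum typical rank with respect to X and let r_max be the maximum value of X-rank over nonzero vectors of ℝ^{n+1}. Then r_max ≤ 2·r₀. -/
/-!
If `U` is a nonempty open set of vectors of rank `r₀` and `u ∈ U`, then for any `v` the vector
`u + ε v` still lies in `U` for some `ε ≠ 0`. Hence `v = ε⁻¹ (u + ε v) - ε⁻¹ u` is a combination
of two vectors of rank `r₀`, and since `X̂` is a cone, it is a sum of `2 r₀` elements of `X̂`.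
-/

open MvPolynomial

/-- `r` is a typical rank with respect to the real cone `Xhat` if the set of vectors of
`X`-rank exactly `r` contains a nonempty Euclidean-open subset of `ℝ^{n+1}`. -/
def IsTypicalRank {n : ℕ} (Xhat : Set (Fin (n + 1) → ℝ)) (r : ℕ) : Prop :=
  ∃ U : Set (Fin (n + 1) → ℝ), IsOpen U ∧ U.Nonempty ∧ ∀ v ∈ U, xRank Xhat v = (r : ℕ∞)

lemma xRank_le_of_mem_sumsOf {F σ : Type*} [CommSemiring F] {S : Set (σ → F)} {v : σ → F}
    {r : ℕ} (h : v ∈ sumsOf S r) : xRank S v ≤ r :=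
  sInf_le ⟨r, rfl, h⟩

lemma smul_mem_sumsOf {F σ : Type*} [CommSemiring F] {S : Set (σ → F)} (hS : IsCone S) (c : F)
    {v : σ → F} {r : ℕ} (h : v ∈ sumsOf S r) : c • v ∈ sumsOf S r := by
  obtain ⟨f, hf, rfl⟩ := h
  exact ⟨fun i => c • f i, fun i => hS c _ (hf i), Finset.smul_sum.symm⟩

/-- Theorem 3 of the paper. For a real irreducible nondegenerate
projective variety with Zariski-dense real points, the maximum real rank is at most
twice the minimum typical rank. -/
theorem stmt_2 {n : ℕ} (I : Set (MvPolynomial (Fin (n + 1)) ℝ))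
    (XhatR : Set (Fin (n + 1) → ℝ)) (XhatC : Set (Fin (n + 1) → ℂ))
    (hXR : XhatR = zLocus I)
    (hXC : XhatC = zLocus (⇑(MvPolynomial.map (algebraMap ℝ ℂ)) '' I))
    (hcone : IsCone XhatR) (hirr : IsZIrreducible XhatR)
    (hnondeg : Submodule.span ℝ XhatR = ⊤)
    (hdense : ∀ C : Set (Fin (n + 1) → ℂ), IsZClosed C →
      (fun x : Fin (n + 1) → ℝ => fun i => (x i : ℂ)) '' XhatR ⊆ C → XhatC ⊆ C)
    (r0 : ℕ) (hr0 : IsLeast {r : ℕ | IsTypicalRank XhatR r} r0)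
    (rmax : ℕ∞)
    (hmax : IsGreatest {r : ℕ∞ | ∃ v : Fin (n + 1) → ℝ, v ≠ 0 ∧ xRank XhatR v = r} rmax) :
    rmax ≤ 2 * (r0 : ℕ∞) := by
  obtain ⟨⟨U, hU, ⟨u, hu⟩, hrank⟩, -⟩ := hr0
  obtain ⟨⟨v, -, rfl⟩, -⟩ := hmax
  obtain ⟨ε, hε, hε0⟩ : ∃ ε : ℝ, u + ε • v ∈ U ∧ ε ≠ 0 := by
    have hcont : Continuous fun ε : ℝ => u + ε • v := by fun_prop
    have hnear : ∀ᶠ ε : ℝ in nhds 0, u + ε • v ∈ U :=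
      hcont.continuousAt.eventually_mem (hU.mem_nhds (by simpa using hu))
    exact ((hnear.filter_mono nhdsWithin_le_nhds).and
      (eventually_mem_nhdsWithin (s := {0}ᶜ))).exists
  have hv : v = ε⁻¹ • (u + ε • v) + (-ε⁻¹) • u := by
    rw [smul_add, inv_smul_smul₀ hε0, neg_smul]
    abel
  have hmem : v ∈ sumsOf XhatR (r0 + r0) := by
    rw [hv]
    exact add_mem_sumsOf
      (smul_mem_sumsOf hcone _ (mem_sumsOf_of_xRank_eq (hrank _ hε)))
      (smul_mem_sumsOf hcone _ (mem_sumsOf_of_xRank_eq (hrank _ hu)))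
  simpa [two_mul] using xRank_le_of_mem_sumsOf hmem
end

section
/- Let X ⊆ ℙⁿ(𝔽) be an irreducible nondegenerate projective variety over an algebraically closed field 𝔽 of characteristic zero. Suppose the secant variety σ_k(X) has codimension c in ℙⁿ, and let s be the maximum X-rank of points lying on σ_k(X). Then the maximum X-rank satisfies r_max ≤ max{s, (c+1)·k}. -/
/-!
Let `S` be the set of sums of `k` points of `Xhat`, and let `v` lie outside the secant cone
`zClosure S`. It suffices to write `v` as a sum of `c + 1` points of `S`.

Starting from `T = S`, keep replacing `T` by `T + F y` with `y ∈ S`, as long as this makes the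
closure of `T` strictly larger while `v` stays outside of it. After `j` replacements `T = S + L`
with `L` spanned by `j` points of `S`, and `zClosure T` has codimension at most `c - j`; since `v`
is outside of it, `j + 1 ≤ c`. As `S` spans the whole space, some line through a point of `S`
does not preserve `zClosure T` under translation, and the same then holds for a general point of
`S`. So when the process stops, `v ∈ zClosure (T + F z)` for general `z ∈ T`. By
`exists_add_of_generic_join`, `v` is then a sum of two points of `T = S + L`, hence of `j + 2`
points of `S`.

The proof of `exists_add_of_generic_join` has to get rid of the two closures.

* Closure of the join: a valuation centered at `v` on the function field of `T × F` shows that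
  either `v = x + t z` with `x ∈ zClosure T`, or `v` is tangent at `z` to `zClosure T`
  (`exists_eq_add_smul_of_mem_closure`). In characteristic zero, Euler's identity excludes the
  second case for general `z` (`exists_directional_derivative_notMem`).
* Closure of `T`: by Chevalley's theorem (`exists_notMem_of_image`), the complement of `T` in `zClosure T`
  is contained in a proper closed subset. If `x` were always in it, projecting along `v`, a generically finite
  map on `zClosure T` since `v` is outside of this cone, would map a general `z` to the projection
  of a proper closed subset (`exists_invariant_multiple`), which is absurd.
-/

open MvPolynomial

/-- The dimension of a subset of affine space: the Krull dimension of the poset of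
irreducible Zariski closed subsets contained in it. -/
noncomputable def zDim {F : Type*} [CommSemiring F] {σ : Type*} (S : Set (σ → F)) :
    WithBot ℕ∞ :=
  Order.krullDim {C : Set (σ → F) // IsZClosed C ∧ IsZIrreducible C ∧ C ⊆ S}

/-! ### Zariski closed sets and ideals of cones -/

section
variable {F : Type*} [Field F] {σ : Type*}

lemma mem_zClosure {S : Set (σ → F)} {v : σ → F} :
    v ∈ zClosure S ↔ ∀ p ∈ vanishingIdeal F S, eval v p = 0 := by
  constructor
  · intro h p hp
    have := h {x | eval x p = 0} ⟨⟨{p}, by ext; simp [zLocus]⟩, fun x hx => by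
      simpa using hp x hx⟩
    exact this
  · rintro h C ⟨⟨I, rfl⟩, hC⟩ p hp
    exact h p fun x hx => by simpa using hC hx p hp

lemma subset_zClosure (S : Set (σ → F)) : S ⊆ zClosure S :=
  fun _ hx _ hC => hC.2 hx

lemma isZClosed_zClosure (S : Set (σ → F)) : IsZClosed (zClosure S) := by
  refine ⟨vanishingIdeal F S, ?_⟩
  ext v
  exact mem_zClosure

lemma zClosure_subset {S C : Set (σ → F)} (hC : IsZClosed C) (h : S ⊆ C) : zClosure S ⊆ C :=
  fun _ hx => hx _ ⟨hC, h⟩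

lemma zClosure_mono {S T : Set (σ → F)} (h : S ⊆ T) : zClosure S ⊆ zClosure T :=
  zClosure_subset (isZClosed_zClosure T) (h.trans (subset_zClosure T))

lemma IsZIrreducible.zClosure {S : Set (σ → F)} (h : IsZIrreducible S) :
    IsZIrreducible (zClosure S) := by
  refine ⟨h.1.mono (subset_zClosure S), fun C₁ C₂ h₁ h₂ hS => ?_⟩
  exact (h.2 C₁ C₂ h₁ h₂ ((subset_zClosure S).trans hS)).imp
    (zClosure_subset h₁) (zClosure_subset h₂)

lemma isZClosed_eval (p : MvPolynomial σ F) : IsZClosed {x | eval x p = 0} :=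
  ⟨{p}, by ext; simp [zLocus]⟩

lemma IsZIrreducible.isPrime {S : Set (σ → F)} (h : IsZIrreducible S) :
    (vanishingIdeal F S).IsPrime := by
  rw [Ideal.isPrime_iff]
  constructor
  · rw [Ideal.ne_top_iff_one]
    intro h1
    obtain ⟨x, hx⟩ := h.1
    simpa using h1 x hx
  · intro p q hpq
    refine (h.2 _ _ (isZClosed_eval p) (isZClosed_eval q) fun x hx => ?_).imp ?_ ?_
    · simpa using hpq x hx
    · exact fun h x hx => by simpa using h hx
    · exact fun h x hx => by simpa using h hx

/-- Zariski closed sets are stable under preimages by polynomial maps. -/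
lemma IsZClosed.preimage {τ : Type*} {C : Set (σ → F)} (hC : IsZClosed C)
    (φ : σ → MvPolynomial τ F) : IsZClosed {w : τ → F | (fun i => eval w (φ i)) ∈ C} := by
  obtain ⟨I, rfl⟩ := hC
  refine ⟨bind₁ φ '' I, ?_⟩
  ext w
  simp only [zLocus, Set.mem_ofPred_eq, Set.forall_mem_image]
  refine forall₂_congr fun p _ => ?_
  rw [← coe_aeval_eq_eval, ← coe_aeval_eq_eval, RingHom.coe_coe, RingHom.coe_coe, aeval_bind₁]

lemma isZClosed_iInter {ι : Type*} {C : ι → Set (σ → F)} (h : ∀ i, IsZClosed (C i)) :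
    IsZClosed {x | ∀ i, x ∈ C i} := by
  choose I hI using h
  refine ⟨⋃ i, I i, ?_⟩
  ext x
  simp only [hI, zLocus, Set.mem_ofPred_eq, Set.mem_iUnion]
  constructor
  · rintro h p ⟨i, hp⟩
    exact h i p hp
  · exact fun h i p hp => h p ⟨i, hp⟩

lemma aeval_mul_of_isHomogeneous {R : Type*} [CommRing R] [Algebra F R] {f : MvPolynomial σ F}
    {e : ℕ} (hf : f.IsHomogeneous e) (c : R) (x : σ → R) :
    aeval (fun i => c * x i) f = c ^ e * aeval x f := by
  rw [aeval_def, aeval_def, eval₂_eq, eval₂_eq, Finset.mul_sum]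
  refine Finset.sum_congr rfl fun d hd => ?_
  simp only [mul_pow, Finset.prod_mul_distrib, Finset.prod_pow_eq_pow_sum]
  rw [hf.degree_eq_sum_deg_support hd]
  ring

/-- The ideal of a cone is homogeneous. -/
lemma homogeneousComponent_mem [Infinite F] {T : Set (σ → F)} (hT : IsCone T)
    {f : MvPolynomial σ F} (hf : f ∈ vanishingIdeal F T) (i : ℕ) :
    homogeneousComponent i f ∈ vanishingIdeal F T := by
  intro x hx
  -- `t ↦ f (t x)` as a univariate polynomial, with coefficients the `fᵢ(x)`
  set P : Polynomial F := ∑ j ∈ Finset.range (f.totalDegree + 1),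
    Polynomial.monomial j (eval x (homogeneousComponent j f)) with hP
  have hP0 : P = 0 := by
    apply Polynomial.funext
    intro t
    have h1 : eval (t • x) f = 0 := by simpa using hf _ (hT t x hx)
    rw [← sum_homogeneousComponent f, map_sum] at h1
    rw [hP, Polynomial.eval_finsetSum, Polynomial.eval_zero, ← h1]
    refine Finset.sum_congr rfl fun j _ => ?_
    have h2 := aeval_mul_of_isHomogeneous (homogeneousComponent_isHomogeneous j f) t x
    rw [Polynomial.eval_monomial, mul_comm]
    rw [show t • x = fun i => t * x i from rfl]
    simpa using h2.symm
  by_cases hi : i ≤ f.totalDegree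
  · have := congrArg (fun Q => Polynomial.coeff Q i) hP0
    simpa [hP, Polynomial.finsetSum_coeff, Polynomial.coeff_monomial, hi, Nat.lt_succ_iff] using this
  · rw [homogeneousComponent_eq_zero _ _ (by omega)]
    simp
end

/-! ### Limits of points of a join -/

section
variable {F : Type*} [Field F] {σ : Type*}

/-- First order Taylor expansion of a polynomial at an `F`-rational point. -/
lemma exists_taylor [Fintype σ] {R : Type*} [CommRing R] [Algebra F R] (f : MvPolynomial σ F)
    (z : σ → F) (y : σ → R) (ε : R) :
    ∃ r : R, aeval (fun i => algebraMap F R (z i) + ε * y i) f =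
      algebraMap F R (eval z f) + ε * (∑ i, algebraMap F R (eval z (pderiv i f)) * y i)
        + ε ^ 2 * r := by
  classical
  induction f using MvPolynomial.induction_on with
  | C a => exact ⟨0, by simp⟩
  | add p q hp hq =>
    obtain ⟨r, hr⟩ := hp
    obtain ⟨s, hs⟩ := hq
    refine ⟨r + s, ?_⟩
    simp only [map_add, hr, hs, add_mul, Finset.sum_add_distrib]
    ring
  | mul_X p j hp =>
    obtain ⟨r, hr⟩ := hp
    refine ⟨(∑ i, algebraMap F R (eval z (pderiv i p)) * y i) * y j
      + r * (algebraMap F R (z j) + ε * y j), ?_⟩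
    have h1 : ∑ i, algebraMap F R (eval z (pderiv i (p * X j))) * y i =
        algebraMap F R (z j) * (∑ i, algebraMap F R (eval z (pderiv i p)) * y i)
          + algebraMap F R (eval z p) * y j := by
      simp only [pderiv_mul, pderiv_X, map_add, map_mul, eval_X, add_mul, Finset.sum_add_distrib,
        Finset.mul_sum]
      congr 1
      · exact Finset.sum_congr rfl fun i _ => by ring
      · rw [Finset.sum_eq_single j]
        · simp
        · intro i _ hij
          simp [hij.symm]
        · simp
    rw [map_mul, hr, h1]
    simp only [map_mul, aeval_X, eval_X]
    ring

/-- Limits along a valuation. Suppose that `x + u z` is a generic point (with coordinates in a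
field `K`) of a variety containing `v`, with `x` satisfying all equations of `T` and `z ∈ T`. Then
either `v = x₀ + t z` with `x₀` in the closure of `T`, or `v` is tangent at `z` to the closure
of `T`, i.e. all `∑ vᵢ ∂ᵢ f (z)` vanish for `f` a homogeneous equation of `T`.
The two cases correspond to `u` being finite or infinite at a valuation ring centered at `v`. -/
lemma exists_eq_add_smul_of_generic [Fintype σ] [IsAlgClosed F] {T : Set (σ → F)}
    {z v : σ → F} (hz : z ∈ T) {K : Type*} [Field K] [Algebra F K] (x : σ → K) (u : K)
    (hx : ∀ p ∈ vanishingIdeal F T, aeval x p = 0)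
    (hker : ∀ p : MvPolynomial σ F,
      aeval (fun i => x i + algebraMap F K (z i) * u) p = 0 → eval v p = 0)
    {f : MvPolynomial σ F} (hf : f ∈ vanishingIdeal F T) {e : ℕ} (hfe : f.IsHomogeneous e)
    (hdf : ∑ i, eval z (pderiv i f) * v i ≠ 0) :
    ∃ x ∈ zClosure T, ∃ t : F, v = x + t • z := by
  classical
  let φ : MvPolynomial σ F →ₐ[F] K := aeval fun i => x i + algebraMap F K (z i) * u
  -- a valuation ring centered at `v`
  let A : Subring K := φ.toRingHom.range
  let J : Ideal A := (vanishingIdeal F {v}).map φ.toRingHom.rangeRestrict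
  have hJ : J ≠ ⊤ := by
    rw [Ideal.ne_top_iff_one]
    intro h1
    obtain ⟨p, hp, hp1⟩ := (Ideal.mem_map_iff_of_surjective _
      φ.toRingHom.rangeRestrict_surjective).1 h1
    have h2 : φ (p - 1) = 0 := by
      have := congrArg Subtype.val hp1
      rw [map_sub, map_one, sub_eq_zero]
      exact this
    have h3 := hker _ h2
    have h4 : eval v p = 0 := by simpa using hp
    simp [h4] at h3
  obtain ⟨O, hAO, hJO⟩ := Ideal.image_subset_nonunits_valuationSubring J hJ
  have hφO : ∀ p, φ p ∈ O := fun p => hAO ⟨p, rfl⟩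
  have hφv : ∀ p, eval v p = 0 → O.valuation (φ p) < 1 := by
    intro p hp
    rw [← ValuationSubring.mem_nonunits_iff]
    exact hJO ⟨φ.toRingHom.rangeRestrict p, Ideal.mem_map_of_mem _ (by simpa using hp), rfl⟩
  have hFO : ∀ a : F, algebraMap F K a ∈ O := fun a => by
    have := hφO (C a)
    rwa [← algebraMap_eq, AlgHom.commutes] at this
  by_cases hu : u ∈ O
  · -- `u` is finite at `v`: the center of the valuation ring is a point of `zClosure T × F`
    let ρ : MvPolynomial (Option σ) F →ₐ[F] K :=
      aeval (R := F) (S₁ := K) fun o => o.elim u fun i => x i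
    have hxO : ∀ i, x i ∈ O := by
      intro i
      have h1 : x i = φ (X i) - algebraMap F K (z i) * u := by
        simp [φ]
      rw [h1]
      exact sub_mem (hφO _) (mul_mem (hFO _) hu)
    have hρO : ∀ p, ρ p ∈ O := by
      intro p
      induction p using MvPolynomial.induction_on with
      | C a => rw [← algebraMap_eq, AlgHom.commutes]; exact hFO a
      | add p q hp hq => rw [map_add]; exact add_mem hp hq
      | mul_X p o hp =>
        rw [map_mul]
        refine mul_mem hp ?_
        cases o with
        | none => simpa [ρ] using hu
        | some i => simpa [ρ] using hxO i
    let Q : Ideal (MvPolynomial (Option σ) F) :=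
      { carrier := {p | O.valuation (ρ p) < 1}
        zero_mem' := by simp
        add_mem' := fun {p q} hp hq => by
          simp only [Set.mem_ofPred_eq, map_add] at *
          exact O.valuation.map_add_lt hp hq
        smul_mem' := fun c p hp => by
          simp only [Set.mem_ofPred_eq, smul_eq_mul, map_mul] at *
          exact (mul_le_of_le_one_left' ((O.valuation_le_one_iff _).2 (hρO c))).trans_lt hp }
    have hQ : Q ≠ ⊤ := by
      rw [Ideal.ne_top_iff_one]
      intro h1
      have h2 : O.valuation (ρ 1) < 1 := h1
      simp at h2
    obtain ⟨M, hM, hQM⟩ := Q.exists_le_maximal hQ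
    obtain ⟨w, rfl⟩ := isMaximal_iff_eq_vanishingIdeal_singleton.1 hM
    have hw : ∀ p, O.valuation (ρ p) < 1 → eval w p = 0 := fun p hp => by
      simpa using hQM hp
    refine ⟨fun i => w (some i), mem_zClosure.2 fun p hp => ?_, w none, ?_⟩
    · have h1 : ρ (rename some p) = 0 := by
        rw [← hx p hp]
        simp only [ρ, aeval_rename]
        rfl
      have h3 := hw (rename some p) (by simp [h1])
      rwa [eval_rename] at h3
    · ext i
      have h1 : ρ (X (some i) + C (z i) * X none - C (v i)) = φ (X i - C (v i)) := by
        simp [ρ, φ]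
      have h2 := hw (X (some i) + C (z i) * X none - C (v i))
        (by rw [h1]; exact hφv _ (by simp))
      simp only [map_sub, map_add, map_mul, eval_X, eval_C, sub_eq_zero] at h2
      simp [← h2, mul_comm]
  · -- `u` is infinite at `v`: expand `f (z - u⁻¹ y) = 0`, where `y = x + u z`, to first order
    exfalso
    have hval : ∀ a, a ∈ O ↔ O.valuation a ≤ 1 := fun a => (O.valuation_le_one_iff a).symm
    let O' : Subalgebra F K := { O.toSubring with algebraMap_mem' := hFO }
    set ω : K := u⁻¹ with hω
    have hu0 : u ≠ 0 := fun h => hu (h ▸ O.zero_mem)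
    have hω0 : ω ≠ 0 := inv_ne_zero hu0
    have hωlt : O.valuation ω < 1 := by
      rw [hval, not_le] at hu
      rw [hω, map_inv₀]
      exact inv_lt_one_of_one_lt₀ hu
    obtain ⟨r, hr⟩ := exists_taylor (R := O') f z (fun i => ⟨φ (X i), hφO _⟩)
      ⟨-ω, (hval _).2 (by rw [Valuation.map_neg]; exact hωlt.le)⟩
    have hr' := congrArg O'.val hr
    rw [comp_aeval_apply] at hr'
    have hleft : (aeval (fun i => O'.val (algebraMap F O' (z i) + (⟨-ω, (hval _).2 (by
        rw [Valuation.map_neg]; exact hωlt.le)⟩ : O') * (⟨φ (X i), hφO _⟩ : O'))) f : K) = 0 := by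
      have h1 := aeval_mul_of_isHomogeneous hfe (-ω) (fun i => x i)
      rw [hx f hf, mul_zero] at h1
      rw [← h1]
      congr 2
      ext i
      have h2 : φ (X i) = x i + algebraMap F K (z i) * u := by
        simp [φ]
      have h3 : ω * u = 1 := inv_mul_cancel₀ hu0
      simp only [map_add, map_mul, Subalgebra.coe_val, AlgHom.commutes, h2]
      linear_combination (-algebraMap F K (z i)) * h3
    have hfz : eval z f = 0 := by simpa using hf z hz
    rw [hleft, hfz] at hr'
    simp only [map_add, map_mul, map_sum, map_zero, map_pow, AlgHom.commutes,
      Subalgebra.coe_val] at hr'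
    have hS : ∑ i, algebraMap F K (eval z (pderiv i f)) * φ (X i) = ω * r := by
      apply mul_left_cancel₀ hω0
      linear_combination hr'
    have hSlt : O.valuation (∑ i, algebraMap F K (eval z (pderiv i f)) * φ (X i)) < 1 := by
      rw [hS, map_mul, mul_comm]
      exact (mul_le_of_le_one_left' ((hval _).1 r.2)).trans_lt hωlt
    have hlt := hφv (∑ i, C (eval z (pderiv i f)) * (X i - C (v i))) (by simp)
    have hdiff : algebraMap F K (∑ i, eval z (pderiv i f) * v i) =
        (∑ i, algebraMap F K (eval z (pderiv i f)) * φ (X i))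
          - φ (∑ i, C (eval z (pderiv i f)) * (X i - C (v i))) := by
      simp [mul_sub, Finset.sum_sub_distrib, ← algebraMap_eq]
    have hlt' := O.valuation.map_sub_lt hSlt hlt
    rw [← hdiff] at hlt'
    have hinv := (hval _).1 (hFO (∑ i, eval z (pderiv i f) * v i)⁻¹)
    have h1 := (mul_le_of_le_one_left' hinv).trans_lt hlt'
    rw [← map_mul, ← map_mul, inv_mul_cancel₀ hdf] at h1
    simp at h1

/-- `exists_eq_add_smul_of_generic` for a generic point `x + u z` of `T + F z` with coordinates in a
domain `D` that can be specialized to every point of `T + F z`. -/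
lemma exists_eq_add_smul_of_specializes [Fintype σ] [IsAlgClosed F] {T : Set (σ → F)}
    {z v : σ → F} (hz : z ∈ T) (hv : v ∈ zClosure {y | ∃ x ∈ T, ∃ t : F, y = x + t • z})
    {D : Type*} [CommRing D] [IsDomain D] [Algebra F D]
    (x : σ → D) (u : D) (hx : ∀ p ∈ vanishingIdeal F T, aeval x p = 0)
    (hspec : ∀ a ∈ T, ∀ t : F, ∃ ev : D →ₐ[F] F, (∀ i, ev (x i) = a i) ∧ ev u = t)
    {f : MvPolynomial σ F} (hf : f ∈ vanishingIdeal F T) {e : ℕ} (hfe : f.IsHomogeneous e)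
    (hdf : ∑ i, eval z (pderiv i f) * v i ≠ 0) :
    ∃ x ∈ zClosure T, ∃ t : F, v = x + t • z := by
  refine exists_eq_add_smul_of_generic hz (fun i => algebraMap D (FractionRing D) (x i))
    (algebraMap D (FractionRing D) u) ?_ ?_ hf hfe hdf
  · intro p hp
    have h1 := aeval_algebraMap_apply (FractionRing D) x p
    rwa [hx p hp, map_zero] at h1
  · intro p hp
    have hp' : aeval (fun i => x i + algebraMap F D (z i) * u) p = 0 := by
      refine IsFractionRing.injective D (FractionRing D) ?_
      rw [map_zero, ← hp, ← aeval_algebraMap_apply]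
      congr 2
      ext i
      simp [IsScalarTower.algebraMap_apply F D (FractionRing D)]
    refine mem_zClosure.1 hv p ?_
    rintro _ ⟨a, ha, t, rfl⟩
    obtain ⟨ev, hev, hevu⟩ := hspec a ha t
    have h1 : ev (aeval (fun i => x i + algebraMap F D (z i) * u) p) = aeval (a + t • z) p := by
      rw [comp_aeval_apply]
      congr 2
      ext i
      simp [hev, hevu, mul_comm]
    rw [← h1, hp', map_zero]

/-- If `v` lies in the closure of `T + F z`, where `z ∈ T`, then either `v` is of the form `x + t z`
with `x` in the closure of `T`, or `v` is tangent at `z` to the closure of `T`. -/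
lemma exists_eq_add_smul_of_mem_closure [Fintype σ] [IsAlgClosed F] {T : Set (σ → F)}
    (hT : (vanishingIdeal F T).IsPrime) {z v : σ → F} (hz : z ∈ T)
    (hv : v ∈ zClosure {y | ∃ x ∈ T, ∃ t : F, y = x + t • z})
    {f : MvPolynomial σ F} (hf : f ∈ vanishingIdeal F T) {e : ℕ} (hfe : f.IsHomogeneous e)
    (hdf : ∑ i, eval z (pderiv i f) * v i ≠ 0) :
    ∃ x ∈ zClosure T, ∃ t : F, v = x + t • z := by
  let x : σ → Polynomial (MvPolynomial σ F ⧸ vanishingIdeal F T) :=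
    fun i => Polynomial.C (Ideal.Quotient.mk _ (X i))
  have hx : ∀ p : MvPolynomial σ F, aeval x p = Polynomial.C (Ideal.Quotient.mk _ p) := by
    intro p
    have : (aeval x : MvPolynomial σ F →ₐ[F] _) =
        (Polynomial.CAlgHom (A := MvPolynomial σ F ⧸ vanishingIdeal F T) (R := F)).comp
          (Ideal.Quotient.mkₐ F (vanishingIdeal F T)) := by
      ext i; simp [x]
    rw [this]; rfl
  refine exists_eq_add_smul_of_specializes hz hv x Polynomial.X ?_ ?_ hf hfe hdf
  · intro p hp
    rw [hx, Ideal.Quotient.eq_zero_iff_mem.2 hp, map_zero]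
  · intro a ha t
    refine ⟨Polynomial.eval₂AlgHom
      (Ideal.Quotient.liftₐ (vanishingIdeal F T) (aeval a) (fun q hq => hq a ha)) t
      (fun _ => Commute.all _ _), ?_, ?_⟩
    · intro i
      simp [x]
    · simp
end

/-! ### Tangency, projection along a vector, and images -/

section
variable {F : Type*} [Field F] {σ : Type*}

lemma exists_isHomogeneous_mem [Infinite F] {T : Set (σ → F)} (hT : IsCone T)
    {v : σ → F} (hv : v ∉ zClosure T) :
    ∃ (h : MvPolynomial σ F) (e : ℕ), h ∈ vanishingIdeal F T ∧ h.IsHomogeneous e ∧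
      eval v h ≠ 0 := by
  rw [mem_zClosure] at hv
  push Not at hv
  obtain ⟨p, hp, hpv⟩ := hv
  rw [← sum_homogeneousComponent p, map_sum] at hpv
  obtain ⟨i, -, hi⟩ := Finset.exists_ne_zero_of_sum_ne_zero hpv
  exact ⟨_, i, homogeneousComponent_mem hT hp i, homogeneousComponent_isHomogeneous i p, hi⟩

/-- In characteristic zero, if `v` is outside the closure of the cone `T`, then `v` is not tangent
to it everywhere: by Euler's identity, a homogeneous equation `h` of `T` of least degree
with `h v ≠ 0` has a directional derivative along `v` which is not an equation of `T`. -/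
lemma exists_directional_derivative_notMem [Fintype σ] [CharZero F] {T : Set (σ → F)}
    (hne : T.Nonempty) (hT : IsCone T) {v : σ → F} (hv : v ∉ zClosure T) :
    ∃ (f : MvPolynomial σ F) (e : ℕ), f ∈ vanishingIdeal F T ∧ f.IsHomogeneous e ∧
      ∑ i, C (v i) * pderiv i f ∉ vanishingIdeal F T := by
  by_contra! hcon
  have key : ∀ e : ℕ, ∀ h ∈ vanishingIdeal F T, h.IsHomogeneous e → eval v h = 0 := by
    intro e
    induction e with
    | zero =>
      intro h hI hh
      obtain ⟨x, hx⟩ := hne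
      rw [← totalDegree_zero_iff_isHomogeneous, totalDegree_eq_zero_iff_eq_C] at hh
      have h1 := hI x hx
      rw [hh] at h1 ⊢
      simpa using h1
    | succ e ih =>
      intro h hI hh
      have h1 : (∑ i, C (v i) * pderiv i h).IsHomogeneous e := by
        refine IsHomogeneous.sum _ _ _ fun i _ => ?_
        simpa using (isHomogeneous_C σ (v i)).mul (hh.pderiv (i := i))
      have h2 := ih _ (hcon h (e + 1) hI hh) h1
      have h3 := congrArg (eval v) hh.sum_X_mul_pderiv
      simp only [map_sum, map_mul, eval_X, eval_C, nsmul_eq_mul, map_natCast] at h2 h3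
      rw [h2] at h3
      exact (mul_eq_zero.1 h3.symm).resolve_left (Nat.cast_ne_zero.2 e.succ_ne_zero)
  obtain ⟨h, e, hI, hh, hhv⟩ := exists_isHomogeneous_mem hT hv
  exact hhv (key e h hI hh)

/-- Restricting `h` to the line through `z` in direction `v` gives a polynomial in the parameter `τ`
whose coefficient of degree `e` is `h v`. The proof uses the reversed polynomial, in `τ⁻¹`, whose
constant term is `h v`. -/
lemma isAlgebraic_of_isHomogeneous {A B : Type*} [CommRing A] [CommRing B] [IsDomain B]
    [Algebra F A] [Algebra F B] [Algebra A B] [IsScalarTower F A B]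
    (hinj : Function.Injective (algebraMap A B)) {h : MvPolynomial σ F} {e : ℕ}
    (hh : h.IsHomogeneous e) {v : σ → F} (hhv : eval v h ≠ 0) {z : σ → A} {τ : B}
    (h0 : aeval (fun k => algebraMap A B (z k) + algebraMap F B (v k) * τ) h = 0) :
    IsAlgebraic A τ := by
  by_cases hτ : τ = 0
  · have : Nontrivial A := (algebraMap A B).domain_nontrivial
    rw [hτ]; exact isAlgebraic_zero
  let K := FractionRing B
  have hBK : Function.Injective (algebraMap B K) := IsFractionRing.injective B K
  rw [← isAlgebraic_algebraMap_iff hBK, ← inv_inv (algebraMap B K τ)]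
  have : IsDomain A := hinj.isDomain _
  apply IsAlgebraic.inv
  let G : Polynomial A :=
    aeval (fun k => Polynomial.C (algebraMap F A (v k)) + Polynomial.X * Polynomial.C (z k)) h
  refine ⟨G, fun hG => ?_, ?_⟩
  · have h1 := comp_aeval_apply
      (fun k => Polynomial.C (algebraMap F A (v k)) + Polynomial.X * Polynomial.C (z k))
      ((Polynomial.aeval (0 : A)).restrictScalars F) h
    rw [AlgHom.restrictScalars_apply, show aeval _ h = (0 : Polynomial A) from hG] at h1
    have h2 : aeval (fun k => algebraMap F A (v k)) h = _ := aeval_algebraMap_apply A v h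
    simp only [AlgHom.restrictScalars_apply, map_zero, map_add, Polynomial.aeval_C, map_mul,
      Polynomial.aeval_X, zero_mul, add_zero, Algebra.algebraMap_self, RingHom.id_apply] at h1
    rw [← h1] at h2
    exact hhv ((FaithfulSMul.algebraMap_injective F A) (by simpa using h2.symm))
  · have h1 := comp_aeval_apply
      (fun k => Polynomial.C (algebraMap F A (v k)) + Polynomial.X * Polynomial.C (z k))
      ((Polynomial.aeval (algebraMap B K τ)⁻¹).restrictScalars F) h
    rw [AlgHom.restrictScalars_apply] at h1
    refine h1.trans ?_
    have h2 : aeval (fun k => algebraMap B K (algebraMap A B (z k) + algebraMap F B (v k) * τ)) h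
        = _ := aeval_algebraMap_apply K (fun k => algebraMap A B (z k) + algebraMap F B (v k) * τ) h
    rw [h0, map_zero] at h2
    have h3 := aeval_mul_of_isHomogeneous hh (algebraMap B K τ)⁻¹
      (fun k => algebraMap B K (algebraMap A B (z k) + algebraMap F B (v k) * τ))
    rw [h2, mul_zero] at h3
    rw [← h3]
    congr 2
    funext k
    have hτK : algebraMap B K τ ≠ 0 := (map_ne_zero_iff _ hBK).2 hτ
    simp only [AlgHom.restrictScalars_apply, map_add, Polynomial.aeval_C, map_mul,
      Polynomial.aeval_X, ← IsScalarTower.algebraMap_apply]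
    rw [mul_add, mul_comm (algebraMap F K (v k)), inv_mul_cancel_left₀ hτK, add_comm]

/-- If `v` is outside the closure of the cone `T`, the projection of this closure along `v` is
generically finite: every polynomial `g` not vanishing on `T` divides, on `T`, a
polynomial not vanishing on `T` which is invariant under translation by multiples of `v`. -/
lemma exists_invariant_multiple [Infinite F] {T : Set (σ → F)}
    (hI : (vanishingIdeal F T).IsPrime) (hT : IsCone T) {v : σ → F} (hv : v ∉ zClosure T)
    {g : MvPolynomial σ F} (hg : g ∉ vanishingIdeal F T) :
    ∃ a ∉ vanishingIdeal F T, (∀ x, ∀ t : F, eval (x + t • v) a = eval x a) ∧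
      ∀ x ∈ zClosure T, eval x g = 0 → eval x a = 0 := by
  by_cases hv0 : v = 0
  · exact ⟨g, hg, by simp [hv0], fun x _ h => h⟩
  obtain ⟨i₀, hi₀⟩ := Function.ne_iff.1 hv0
  obtain ⟨h, e, hhI, hh, hhv⟩ := exists_isHomogeneous_mem hT hv
  let B := MvPolynomial σ F ⧸ vanishingIdeal F T
  let π : MvPolynomial σ F →ₐ[F] B := Ideal.Quotient.mkₐ F _
  -- the invariant polynomials, and their image in the coordinate ring
  let N : Subalgebra F (MvPolynomial σ F) :=
    { carrier := {a | ∀ x, ∀ t : F, eval (x + t • v) a = eval x a}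
      mul_mem' := fun {a b} ha hb x t => by rw [map_mul, map_mul, ha, hb]
      add_mem' := fun {a b} ha hb x t => by rw [map_add, map_add, ha, hb]
      algebraMap_mem' := fun c x t => by simp [algebraMap_eq] }
  let A : Subalgebra F B := N.map π
  let z : σ → MvPolynomial σ F := fun k => X k - C (v k / v i₀) * X i₀
  have hz : ∀ k, z k ∈ N := by
    intro k x t
    have : v i₀ ≠ 0 := hi₀
    simp [z]
    field_simp
    ring
  let zA : σ → A := fun k => ⟨π (z k), z k, hz k, rfl⟩
  let τ : B := π (C (v i₀)⁻¹ * X i₀)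
  have hxz : ∀ k, π (X k) = zA k + algebraMap F B (v k) * τ := by
    intro k
    have h1 : X k = z k + C (v k) * (C (v i₀)⁻¹ * X i₀) := by
      simp only [z, div_eq_mul_inv, C_mul]; ring
    conv_lhs => rw [h1]
    rw [map_add, map_mul, show π (C (v k)) = algebraMap F B (v k) from π.commutes _]
  have hτ : IsAlgebraic A τ := by
    refine isAlgebraic_of_isHomogeneous Subtype.val_injective hh hhv (z := zA) ?_
    have h1 : π h = 0 := Ideal.Quotient.eq_zero_iff_mem.2 hhI
    have h2 : π = aeval (fun k => π (X k)) := by ext k; simp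
    rw [h2] at h1
    simp only [hxz] at h1
    exact h1
  have halg : ∀ p, IsAlgebraic A (π p) := by
    intro p
    induction p using MvPolynomial.induction_on with
    | C c =>
      rw [← algebraMap_eq, AlgHom.commutes, IsScalarTower.algebraMap_apply F A B]
      exact isAlgebraic_algebraMap _
    | add p q hp hq => rw [map_add]; exact hp.add hq
    | mul_X p k hp =>
      rw [map_mul, hxz, IsScalarTower.algebraMap_apply F A B]
      exact hp.mul ((isAlgebraic_algebraMap (zA k)).add ((isAlgebraic_algebraMap _).mul hτ))
  have hg0 : π g ≠ 0 := fun h => hg (Ideal.Quotient.eq_zero_iff_mem.1 h)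
  obtain ⟨⟨_, a, haN, rfl⟩, ha0, hdvd⟩ :=
    (halg g).exists_nonzero_dvd (mem_nonZeroDivisors_of_ne_zero hg0)
  refine ⟨a, fun ha => ha0 (Subtype.ext (Ideal.Quotient.eq_zero_iff_mem.2 ha)), haN, ?_⟩
  intro x hx hgx
  obtain ⟨b, hb⟩ := hdvd
  obtain ⟨b, rfl⟩ := Ideal.Quotient.mk_surjective b
  have h1 : a - g * b ∈ vanishingIdeal F T := (Ideal.Quotient.mk_eq_mk_iff_sub_mem _ _).1 hb
  have h2 := mem_zClosure.1 hx _ h1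
  simpa [hgx, sub_eq_zero] using h2

/-- A dominant polynomial map from an irreducible variety has an image which contains a nonempty
open subset of its closure (Chevalley's theorem). -/
lemma exists_notMem_of_image [IsAlgClosed F] [Finite σ] {τ : Type*} [Finite τ] {W : Set (τ → F)}
    (hW : IsZClosed W) (hWi : IsZIrreducible W) (φ : σ → MvPolynomial τ F) {T : Set (σ → F)}
    (hT : T = (fun w i => eval w (φ i)) '' W) :
    ∃ g ∉ vanishingIdeal F T, ∀ x ∈ zClosure T, eval x g ≠ 0 → x ∈ T := by
  have hWp := hWi.isPrime
  let f : MvPolynomial σ F →ₐ[F] MvPolynomial τ F ⧸ vanishingIdeal F W :=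
    (Ideal.Quotient.mkₐ F _).comp (aeval φ)
  have hev : ∀ w p, eval w (aeval φ p) = eval (fun i => eval w (φ i)) p := by
    intro w p
    have := comp_aeval_apply φ (aeval w : MvPolynomial τ F →ₐ[F] F) p
    simpa using this
  have hker : ∀ p, f p = 0 ↔ p ∈ vanishingIdeal F T := by
    intro p
    rw [show f p = Ideal.Quotient.mk _ (aeval φ p) from rfl, Ideal.Quotient.eq_zero_iff_mem, hT]
    simp only [mem_vanishingIdeal_iff, Set.forall_mem_image, aeval_eq_eval, hev]
  have hfp : f.toRingHom.FinitePresentation := by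
    apply RingHom.FinitePresentation.of_finiteType.1
    apply RingHom.FiniteType.of_comp_finiteType (f := algebraMap F (MvPolynomial σ F))
    rw [show f.toRingHom.comp (algebraMap F (MvPolynomial σ F)) = algebraMap F _ from
      f.comp_algebraMap, RingHom.finiteType_algebraMap]
    infer_instance
  obtain ⟨S, hS⟩ := PrimeSpectrum.exists_constructibleSetData_iff.2
    (PrimeSpectrum.isConstructible_range_comap hfp)
  have hgen : PrimeSpectrum.comap f.toRingHom ⊥ ∈ S.toSet := hS ▸ ⟨_, rfl⟩
  have hgenI : (PrimeSpectrum.comap f.toRingHom ⊥).asIdeal = vanishingIdeal F T := by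
    ext p
    exact hker p
  simp only [PrimeSpectrum.ConstructibleSetData.toSet, Set.mem_iUnion] at hgen
  obtain ⟨D, hDS, hD⟩ := hgen
  obtain ⟨hD1, hD2⟩ := hD
  rw [PrimeSpectrum.mem_zeroLocus, hgenI] at hD1 hD2
  refine ⟨D.f, by simpa using hD2, fun x hx hgx => ?_⟩
  have hx' : (⟨vanishingIdeal F {x}, inferInstance⟩ : PrimeSpectrum (MvPolynomial σ F)) ∈
      S.toSet := by
    simp only [PrimeSpectrum.ConstructibleSetData.toSet, Set.mem_iUnion]
    refine ⟨D, hDS, ?_, ?_⟩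
    · rw [PrimeSpectrum.mem_zeroLocus]
      intro p hp
      simpa using mem_zClosure.1 hx p (hD1 hp)
    · rw [PrimeSpectrum.mem_zeroLocus]
      simpa using hgx
  rw [hS] at hx'
  obtain ⟨q, hq⟩ := hx'
  obtain ⟨M, hM, hqM⟩ := q.asIdeal.exists_le_maximal q.isPrime.ne_top
  have hM' : (M.comap (Ideal.Quotient.mk (vanishingIdeal F W))).IsMaximal :=
    Ideal.comap_isMaximal_of_surjective _ Ideal.Quotient.mk_surjective
  obtain ⟨w, hw⟩ := isMaximal_iff_eq_vanishingIdeal_singleton.1 hM'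
  have hwW : w ∈ W := by
    obtain ⟨I, rfl⟩ := hW
    intro p hp
    have h1 : p ∈ M.comap (Ideal.Quotient.mk (vanishingIdeal F (zLocus I))) := by
      rw [Ideal.mem_comap, Ideal.Quotient.eq_zero_iff_mem.2]
      · exact M.zero_mem
      · intro y hy
        simpa using hy p hp
    rw [hw] at h1
    simpa using h1
  rw [hT]
  refine ⟨w, hwW, ?_⟩
  ext i
  have h1 : X i - C (x i) ∈ vanishingIdeal F {x} := by simp
  rw [show vanishingIdeal F {x} = (PrimeSpectrum.comap f.toRingHom q).asIdeal by rw [hq]] at h1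
  have h2 : aeval φ (X i - C (x i)) ∈ M.comap (Ideal.Quotient.mk (vanishingIdeal F W)) := hqM h1
  rw [hw] at h2
  simpa [sub_eq_zero] using h2
end

/-! ### Parametrized sets -/

section
open scoped Pointwise
variable {F : Type*} [Field F] {σ : Type*}

lemma IsZIrreducible.image {τ : Type*} {W : Set (τ → F)} (hW : IsZIrreducible W)
    (φ : σ → MvPolynomial τ F) : IsZIrreducible ((fun w i => eval w (φ i)) '' W) := by
  refine ⟨hW.1.image _, fun C₁ C₂ h₁ h₂ h => ?_⟩
  rw [Set.image_subset_iff] at h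
  exact (hW.2 _ _ (h₁.preimage φ) (h₂.preimage φ) h).imp Set.image_subset_iff.2
    Set.image_subset_iff.2

lemma isZClosed_univ : IsZClosed (Set.univ : Set (σ → F)) := ⟨∅, by simp [zLocus]⟩

lemma isZIrreducible_univ [Infinite F] : IsZIrreducible (Set.univ : Set (σ → F)) := by
  refine ⟨Set.univ_nonempty, ?_⟩
  rintro _ _ ⟨I₁, rfl⟩ ⟨I₂, rfl⟩ h
  by_contra! hcon
  simp only [Set.not_subset, zLocus, Set.mem_ofPred_eq, not_forall] at hcon
  obtain ⟨⟨x₁, -, p₁, hp₁, h₁⟩, x₂, -, p₂, hp₂, h₂⟩ := hcon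
  have h0 : p₁ * p₂ = 0 := by
    refine MvPolynomial.funext fun x => ?_
    rw [map_mul, map_zero, mul_eq_zero]
    exact (h (Set.mem_univ x)).imp (fun hx => hx p₁ hp₁) (fun hx => hx p₂ hp₂)
  rcases mul_eq_zero.1 h0 with rfl | rfl
  · exact h₁ (map_zero _)
  · exact h₂ (map_zero _)

/-- `T` is the image of an irreducible affine variety under a polynomial map. -/
def IsParam (T : Set (σ → F)) : Prop :=
  ∃ (τ : Type) (_ : Finite τ) (W : Set (τ → F)) (φ : σ → MvPolynomial τ F),
    IsZClosed W ∧ IsZIrreducible W ∧ T = (fun w i => eval w (φ i)) '' W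

lemma IsParam.isZIrreducible {T : Set (σ → F)} (hT : IsParam T) : IsZIrreducible T := by
  obtain ⟨τ, _, W, φ, -, hW, rfl⟩ := hT
  exact hW.image φ

lemma IsParam.span_singleton [Infinite F] (y : σ → F) :
    IsParam (Submodule.span F {y} : Set (σ → F)) := by
  refine ⟨Unit, inferInstance, Set.univ, fun i => X () * C (y i), isZClosed_univ,
    isZIrreducible_univ, ?_⟩
  ext x
  simp only [SetLike.mem_coe, Submodule.mem_span_singleton, Set.image_univ, Set.mem_range, map_mul,
    eval_X, eval_C]
  exact ⟨fun ⟨a, ha⟩ => ⟨fun _ => a, ha⟩, fun ⟨a, ha⟩ => ⟨a (), ha⟩⟩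

lemma IsParam.zero [Infinite F] : IsParam ({0} : Set (σ → F)) := by
  simpa using IsParam.span_singleton (0 : σ → F)

lemma isZIrreducible_prod {τ₁ τ₂ : Type*} {W₁ : Set (τ₁ → F)} {W₂ : Set (τ₂ → F)}
    (h₁ : IsZIrreducible W₁) (h₂ : IsZIrreducible W₂) :
    IsZIrreducible {w : τ₁ ⊕ τ₂ → F | w ∘ Sum.inl ∈ W₁ ∧ w ∘ Sum.inr ∈ W₂} := by
  obtain ⟨a₀, ha₀⟩ := h₁.1
  obtain ⟨b₀, hb₀⟩ := h₂.1
  refine ⟨⟨Sum.elim a₀ b₀, by simpa using ⟨ha₀, hb₀⟩⟩, fun C₁ C₂ hC₁ hC₂ h => ?_⟩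
  have hslice : ∀ C : Set (τ₁ ⊕ τ₂ → F), IsZClosed C →
      IsZClosed {a : τ₁ → F | ∀ b : W₂, a ∈ {a | Sum.elim a b.1 ∈ C}} := by
    intro C hC
    refine isZClosed_iInter fun b => ?_
    convert hC.preimage (Sum.elim X fun j => MvPolynomial.C (b.1 j)) using 3 with a
    refine iff_of_eq (congrArg (· ∈ C) ?_)
    ext (i | i) <;> simp
  have hfiber : ∀ a ∈ W₁, (∀ b ∈ W₂, Sum.elim a b ∈ C₁) ∨ ∀ b ∈ W₂, Sum.elim a b ∈ C₂ := by
    intro a ha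
    have h3 := (h₂.image (Sum.elim (fun i => C (a i)) X : τ₁ ⊕ τ₂ → MvPolynomial τ₂ F))
    have h4 : ∀ b : τ₂ → F, (fun i => eval b ((Sum.elim (fun i => C (a i)) X :
        τ₁ ⊕ τ₂ → MvPolynomial τ₂ F) i)) = Sum.elim a b := by
      intro b
      ext (i | i) <;> simp
    simp only [h4] at h3
    refine (h3.2 C₁ C₂ hC₁ hC₂ ?_).imp (fun h => Set.image_subset_iff.1 h)
      (fun h => Set.image_subset_iff.1 h)
    rintro _ ⟨b, hb, rfl⟩
    exact h (by simpa using ⟨ha, hb⟩)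
  refine (h₁.2 _ _ (hslice C₁ hC₁) (hslice C₂ hC₂) fun a ha => ?_).imp ?_ ?_
  · exact (hfiber a ha).imp (fun h b => h b.1 b.2) (fun h b => h b.1 b.2)
  all_goals
    intro h w hw
    have h5 := h hw.1 ⟨_, hw.2⟩
    simpa [Sum.elim_comp_inl_inr] using h5

lemma IsParam.add {T₁ T₂ : Set (σ → F)} (h₁ : IsParam T₁) (h₂ : IsParam T₂) :
    IsParam (T₁ + T₂) := by
  obtain ⟨τ₁, _, W₁, φ₁, hc₁, hi₁, rfl⟩ := h₁
  obtain ⟨τ₂, _, W₂, φ₂, hc₂, hi₂, rfl⟩ := h₂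
  refine ⟨τ₁ ⊕ τ₂, inferInstance, _,
    fun i => rename Sum.inl (φ₁ i) + rename Sum.inr (φ₂ i), ?_, isZIrreducible_prod hi₁ hi₂, ?_⟩
  · have h1 := hc₁.preimage (fun i => (X (Sum.inl i) : MvPolynomial (τ₁ ⊕ τ₂) F))
    have h2 := hc₂.preimage (fun i => (X (Sum.inr i) : MvPolynomial (τ₁ ⊕ τ₂) F))
    simp only [eval_X] at h1 h2
    convert isZClosed_iInter (C := fun b : Bool => bif b then _ else _)
      (Bool.forall_bool.2 ⟨h2, h1⟩) using 1
    ext w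
    simp only [Bool.forall_bool, Set.mem_ofPred_eq]
    exact and_comm
  · ext x
    simp only [Set.mem_add, Set.exists_mem_image, map_add, eval_rename]
    constructor
    · rintro ⟨a, ha, b, hb, rfl⟩
      refine ⟨Sum.elim a b, by simpa using ⟨ha, hb⟩, ?_⟩
      ext i
      simp
    · rintro ⟨w, hw, rfl⟩
      exact ⟨_, hw.1, _, hw.2, rfl⟩

lemma IsCone.zClosure {T : Set (σ → F)} (hT : IsCone T) : IsCone (zClosure T) := by
  intro c
  have h1 := (isZClosed_zClosure T).preimage (fun i => C c * X i)
  refine zClosure_subset (S := T) (C := {x | c • x ∈ _root_.zClosure T}) ?_ ?_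
  · convert h1 using 3 with x
    refine iff_of_eq (congrArg (· ∈ _root_.zClosure T) ?_)
    ext i
    simp
  · exact fun x hx => subset_zClosure T (hT c x hx)

/-! ### The generic join step -/

/-- If `v` lies in the closed join of `T` with a general point of `T`, but not in the closure of
`T`, then it is a sum of two points of `T`. -/
lemma exists_add_of_generic_join [IsAlgClosed F] [CharZero F] [Fintype σ] {T : Set (σ → F)}
    (hP : IsParam T) (hT : IsCone T) {v : σ → F} (hv : v ∉ zClosure T) {p : MvPolynomial σ F}
    (hp : p ∉ vanishingIdeal F T)
    (hpz : ∀ z ∈ T, eval z p ≠ 0 → v ∈ zClosure {y | ∃ x ∈ T, ∃ t : F, y = x + t • z}) :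
    ∃ x ∈ T, ∃ z ∈ T, v = x + z := by
  by_contra! hcon
  have hI := hP.isZIrreducible.isPrime
  obtain ⟨f, e, hf, hfe, hδ⟩ :=
    exists_directional_derivative_notMem hP.isZIrreducible.1 hT hv
  obtain ⟨g, hg, hgT⟩ : ∃ g ∉ vanishingIdeal F T, ∀ x ∈ zClosure T, eval x g ≠ 0 → x ∈ T := by
    obtain ⟨τ, _, W, φ, hW, hWi, hTW⟩ := hP
    exact exists_notMem_of_image hW hWi φ hTW
  obtain ⟨a, ha, hav, hag⟩ := exists_invariant_multiple hI hT hv hg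
  -- `a` vanishes on the complement of `T` in `zClosure T`, and a general point of `T` would be
  -- the translate along `v` of a point of this complement
  have hmem : p * (∑ i, C (v i) * pderiv i f) * a ∈ vanishingIdeal F T := by
    rw [mem_vanishingIdeal_iff]
    intro z hz
    rw [aeval_eq_eval, map_mul, map_mul]
    by_cases h1 : eval z p = 0
    · simp [h1]
    by_cases h2 : eval z (∑ i, C (v i) * pderiv i f) = 0
    · rw [h2]; simp
    obtain ⟨m, hm, t, hvm⟩ := exists_eq_add_smul_of_mem_closure hI hz (hpz z hz h1) hf hfe
      (by simpa [mul_comm] using h2)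
    have ht : t ≠ 0 := by
      rintro rfl
      exact hv (by simpa [hvm] using hm)
    have hz' : z = (-t⁻¹) • m + t⁻¹ • v := by
      rw [hvm, smul_add, smul_smul, inv_mul_cancel₀ ht, one_smul, neg_smul]; abel
    have hm' : (-t⁻¹) • m ∉ T := by
      intro h
      refine hcon m ?_ (t • z) (hT t z hz) hvm
      have := hT (-t) _ h
      rwa [smul_smul, neg_mul_neg, mul_inv_cancel₀ ht, one_smul] at this
    have hm'' := hT.zClosure (-t⁻¹) m hm
    have h3 := hag _ hm'' (by_contra fun h => hm' (hgT _ hm'' h))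
    rw [hz', hav, h3, mul_zero]
  rcases hI.mem_or_mem hmem with h | h
  · exact (hI.mem_or_mem h).elim hp hδ
  · exact ha h

/-! ### Sums of points of a cone and rank -/

lemma sumsOf_zero (S : Set (σ → F)) : sumsOf S 0 = {0} := by
  ext v
  simp [sumsOf, eq_comm]

lemma sumsOf_succ (S : Set (σ → F)) (r : ℕ) : sumsOf S (r + 1) = S + sumsOf S r := by
  ext v
  simp only [Set.mem_add, sumsOf, Set.mem_ofPred_eq]
  constructor
  · rintro ⟨f, hf, rfl⟩
    exact ⟨f 0, hf 0, _, ⟨fun i => f i.succ, fun i => hf _, rfl⟩, (Fin.sum_univ_succ f).symm⟩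
  · rintro ⟨x, hx, _, ⟨f, hf, rfl⟩, rfl⟩
    exact ⟨Fin.cons x f, Fin.cases hx hf, by simp [Fin.sum_univ_succ]⟩

lemma sumsOf_add (S : Set (σ → F)) (a b : ℕ) : sumsOf S (a + b) = sumsOf S a + sumsOf S b := by
  induction a with
  | zero => simp [sumsOf_zero]
  | succ a ih => rw [add_right_comm, sumsOf_succ, sumsOf_succ, ih, add_assoc]

lemma sumsOf_mul (S : Set (σ → F)) (r k : ℕ) : sumsOf S (r * k) = sumsOf (sumsOf S k) r := by
  induction r with
  | zero => simp [sumsOf_zero]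
  | succ r ih => rw [sumsOf_succ, ← ih, add_mul, one_mul, add_comm, sumsOf_add]

lemma zero_mem_sumsOf {S : Set (σ → F)} (h0 : 0 ∈ S) (r : ℕ) : 0 ∈ sumsOf S r :=
  ⟨fun _ => 0, fun _ => h0, by simp⟩

lemma sumsOf_mono {S : Set (σ → F)} (h0 : 0 ∈ S) {a b : ℕ} (hab : a ≤ b) :
    sumsOf S a ⊆ sumsOf S b := by
  obtain ⟨m, rfl⟩ := Nat.exists_eq_add_of_le hab
  rw [sumsOf_add]
  exact fun x hx => ⟨x, hx, 0, zero_mem_sumsOf h0 m, add_zero x⟩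

lemma IsCone.sumsOf {S : Set (σ → F)} (hS : IsCone S) (r : ℕ) : IsCone (sumsOf S r) := by
  rintro t _ ⟨f, hf, rfl⟩
  exact ⟨fun i => t • f i, fun i => hS t _ (hf i), by rw [Finset.smul_sum]⟩

lemma IsParam.sumsOf [Infinite F] {S : Set (σ → F)} (hS : IsParam S) (r : ℕ) :
    IsParam (sumsOf S r) := by
  induction r with
  | zero => rw [sumsOf_zero]; exact IsParam.zero
  | succ r ih => rw [sumsOf_succ]; exact hS.add ih

lemma xRank_le_iff {S : Set (σ → F)} (h0 : 0 ∈ S) {v : σ → F} {r : ℕ} :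
    xRank S v ≤ r ↔ v ∈ sumsOf S r := by
  constructor
  · intro h
    have hne : {r : ℕ∞ | ∃ s : ℕ, r = s ∧ v ∈ sumsOf S s}.Nonempty := by
      by_contra hne
      rw [Set.not_nonempty_iff_eq_empty] at hne
      rw [xRank, hne, sInf_empty] at h
      exact absurd h (by simp)
    obtain ⟨s, hs, hv⟩ := csInf_mem hne
    rw [xRank, hs, Nat.cast_le] at h
    exact sumsOf_mono h0 h hv
  · exact fun h => sInf_le ⟨r, rfl, h⟩

/-! ### Chains of irreducible closed sets -/

/-- The poset of irreducible Zariski closed subsets of affine space. -/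
abbrev IrrClosed (F : Type*) [Field F] (σ : Type*) :=
  {C : Set (σ → F) // IsZClosed C ∧ IsZIrreducible C}

lemma length_le_card [Fintype σ] (l : LTSeries (IrrClosed F σ)) : l.length ≤ Fintype.card σ := by
  let f : IrrClosed F σ → (PrimeSpectrum (MvPolynomial σ F))ᵒᵈ :=
    fun C => OrderDual.toDual ⟨vanishingIdeal F C.1, C.2.2.isPrime⟩
  have hcl : ∀ C : IrrClosed F σ, zClosure C.1 = C.1 := fun C =>
    (zClosure_subset C.2.1 subset_rfl).antisymm (subset_zClosure _)
  have hf : StrictMono f := by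
    intro C D h
    refine lt_of_le_of_ne (vanishingIdeal_anti_mono (k := F) h.le) fun heq => h.ne ?_
    have h1 : vanishingIdeal F C.1 = vanishingIdeal F D.1 :=
      congrArg (fun P => (OrderDual.ofDual P).asIdeal) heq
    refine Subtype.ext ?_
    rw [← hcl C, ← hcl D]
    ext x
    rw [mem_zClosure, mem_zClosure, h1]
  have h1 := (Order.LTSeries.length_le_krullDim l).trans (Order.krullDim_le_of_strictMono f hf)
  have h2 : ringKrullDim (MvPolynomial σ F) = Fintype.card σ := by
    rw [MvPolynomial.ringKrullDim_of_isNoetherianRing, ringKrullDim_eq_zero_of_field, zero_add,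
      Nat.card_eq_fintype_card]
  rw [Order.krullDim_orderDual] at h1
  have h3 := h1.trans_eq h2
  exact_mod_cast h3
end

/-! ### Enlarging the cone by lines -/

section
open scoped Pointwise
variable {F : Type*} [Field F] {σ : Type*}

/-- If a nonempty set `T` is stable, up to closure, under translation by the lines through a
spanning set `S`, then it is Zariski dense. -/
lemma zClosure_eq_univ_of_add_span {S T : Set (σ → F)} (hS : Submodule.span F S = ⊤)
    (hT : T.Nonempty) (h : ∀ y ∈ S, T + (Submodule.span F {y} : Set (σ → F)) ⊆ zClosure T) :
    zClosure T = Set.univ := by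
  have key : ∀ u ∈ Submodule.span F S, ∀ (t : F), ∀ m ∈ zClosure T, m + t • u ∈ zClosure T := by
    intro u hu
    induction hu using Submodule.span_induction with
    | mem y hy =>
      intro t
      have h1 := (isZClosed_zClosure T).preimage (fun i => X i + C (t * y i))
      refine zClosure_subset (S := T) (C := {m | m + t • y ∈ zClosure T}) ?_ ?_
      · convert h1 using 3 with x
        refine iff_of_eq (congrArg (· ∈ zClosure T) ?_)
        ext i
        simp
      · exact fun x hx => h y hy (Set.add_mem_add hx
          (Submodule.smul_mem _ t (Submodule.mem_span_singleton_self y)))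
    | zero => intro t m hm; simpa using hm
    | add a b _ _ ha hb => intro t m hm; rw [smul_add, ← add_assoc]; exact hb t _ (ha t m hm)
    | smul c a _ ha => intro t m hm; rw [smul_smul]; exact ha _ m hm
  obtain ⟨x, hx⟩ := hT
  refine Set.eq_univ_of_forall fun v => ?_
  have := key (v - x) (hS ▸ Submodule.mem_top) 1 x (subset_zClosure T hx)
  simpa using this

/-- Enlarging `S` by lines through points of `S`, as long as the closure grows without reaching
`v`; each enlargement raises the dimension by at least one and costs one more summand, and when
none is possible any more `v` is a sum of two points of the current set `S + L`. -/
lemma mem_sumsOf_of_chain [IsAlgClosed F] [CharZero F] [Fintype σ] {S : Set (σ → F)}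
    (hSc : IsCone S) (hspan : Submodule.span F S = ⊤) {v : σ → F} (i : ℕ) :
    ∀ (L : Submodule F (σ → F)) (j : ℕ), (∀ x ∈ L, x ∈ sumsOf S j) →
      IsParam (S + (L : Set (σ → F))) →
      v ∉ zClosure (S + (L : Set (σ → F))) →
      ∀ l : LTSeries (IrrClosed F σ), l.last.1 ⊆ zClosure (S + (L : Set (σ → F))) →
      Fintype.card σ ≤ l.length + i → v ∈ sumsOf S (j + i + 1) := by
  induction i with
  | zero =>
    intro L j hL hP hv l hl hcard
    have hlt : l.last < (⟨Set.univ, isZClosed_univ, isZIrreducible_univ⟩ : IrrClosed F σ) :=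
      lt_of_le_of_ne (Set.subset_univ _) fun h => hv (hl (by rw [h]; trivial))
    have := length_le_card (l.snoc _ hlt)
    simp at this
    omega
  | succ i ih =>
    intro L j hL hP hv l hl hcard
    set T : Set (σ → F) := S + (L : Set (σ → F)) with hTdef
    have hST : S ⊆ T := fun x hx => ⟨x, hx, 0, L.zero_mem, add_zero x⟩
    have hSne : S.Nonempty := by
      obtain ⟨_, x, hx, -⟩ := hP.isZIrreducible.1
      exact ⟨x, hx⟩
    have h0 : (0 : σ → F) ∈ S := by
      obtain ⟨x, hx⟩ := hSne
      simpa using hSc 0 x hx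
    have hTL : ∀ x ∈ T, ∀ u ∈ L, x + u ∈ T := by
      rintro _ ⟨a, ha, b, hb, rfl⟩ u hu
      exact ⟨a, ha, b + u, L.add_mem hb hu, (add_assoc a b u).symm⟩
    have hTc : IsCone T := by
      rintro t _ ⟨a, ha, b, hb, rfl⟩
      exact ⟨t • a, hSc t a ha, t • b, L.smul_mem t hb, (smul_add t a b).symm⟩
    by_cases hex : ∃ y ∈ S, ¬ (T + (Submodule.span F {y} : Set (σ → F)) ⊆ zClosure T) ∧
        v ∉ zClosure (T + (Submodule.span F {y} : Set (σ → F)))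
    · obtain ⟨y, hy, hy1, hy2⟩ := hex
      have hT' : S + ((L ⊔ Submodule.span F {y} : Submodule F (σ → F)) : Set (σ → F)) =
          T + (Submodule.span F {y} : Set (σ → F)) := by
        rw [Submodule.coe_sup, ← add_assoc]
      have hP' := hP.add (IsParam.span_singleton y)
      have hlt : l.last < (⟨_, isZClosed_zClosure _, hP'.isZIrreducible.zClosure⟩ :
          IrrClosed F σ) := by
        have hTT : T ⊆ T + (Submodule.span F {y} : Set (σ → F)) :=
          fun x hx => ⟨x, hx, 0, Submodule.zero_mem _, add_zero x⟩
        refine lt_of_le_of_ne (hl.trans (zClosure_mono hTT)) fun h => hy1 ?_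
        rw [h] at hl
        exact (subset_zClosure _).trans hl
      have := ih (L ⊔ Submodule.span F {y}) (j + 1) ?_ (hT' ▸ hP') (hT' ▸ hy2) (l.snoc _ hlt)
        ?_ ?_
      · rwa [add_right_comm j 1 i] at this
      · intro x hx
        obtain ⟨a, ha, b, hb, rfl⟩ := Submodule.mem_sup.1 hx
        obtain ⟨t, rfl⟩ := Submodule.mem_span_singleton.1 hb
        rw [sumsOf_succ, add_comm a]
        exact Set.add_mem_add (hSc t y hy) (hL a ha)
      · rw [hT']
        simp
      · simp
        omega
    push Not at hex
    -- a point `y` of `S` translation along which does not preserve the closure of `T`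
    obtain ⟨y, hy, hyT⟩ : ∃ y ∈ S, ¬ (T + (Submodule.span F {y} : Set (σ → F)) ⊆ zClosure T) := by
      by_contra! hcon
      refine hv ?_
      rw [zClosure_eq_univ_of_add_span hspan (hSne.mono hST) hcon]
      trivial
    obtain ⟨_, ⟨m, hm, _, hb, rfl⟩, hmy⟩ := Set.not_subset.1 hyT
    obtain ⟨t, rfl⟩ := Submodule.mem_span_singleton.1 hb
    have hmy' := hmy
    rw [mem_zClosure] at hmy'
    push Not at hmy'
    obtain ⟨f, hf, hfy⟩ := hmy'
    have hev : ∀ x : σ → F, eval x (bind₁ (fun i => C (m i) + C t * X i) f) =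
        eval (m + t • x) f := by
      intro x
      have := comp_aeval_apply (fun i => C (m i) + C t * X i) (aeval x : MvPolynomial σ F →ₐ[F] F) f
      simp only [aeval_eq_bind₁, aeval_eq_eval, map_add, map_mul, eval_C, eval_X] at this
      exact this
    set p := bind₁ (fun i => C (m i) + C t * X i) f
    have hp : p ∉ vanishingIdeal F T := by
      intro h
      have h1 := h y (hST hy)
      rw [aeval_eq_eval] at h1
      exact hfy ((hev y).symm.trans h1)
    have hpz : ∀ z ∈ T, eval z p ≠ 0 → v ∈ zClosure {y | ∃ x ∈ T, ∃ t : F, y = x + t • z} := by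
      rintro _ ⟨a, ha, b, hb, rfl⟩ hne
      rw [hev] at hne
      have h1 : ¬ (T + (Submodule.span F {a} : Set (σ → F)) ⊆ zClosure T) := by
        intro hsub
        refine hne (mem_zClosure.1 (hsub ?_) f hf)
        refine ⟨m + t • b, hTL m hm _ (L.smul_mem t hb), t • a,
          Submodule.smul_mem _ t (Submodule.mem_span_singleton_self a), ?_⟩
        simp only [smul_add]
        abel
      refine zClosure_mono ?_ (hex a ha h1)
      rintro _ ⟨x, hx, _, hu, rfl⟩
      obtain ⟨r, rfl⟩ := Submodule.mem_span_singleton.1 hu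
      refine ⟨x + (-r) • b, hTL x hx _ (L.smul_mem _ hb), r, ?_⟩
      simp only [smul_add, neg_smul]
      abel
    obtain ⟨_, ⟨a, ha, b, hb, rfl⟩, _, ⟨a', ha', b', hb', rfl⟩, hvx⟩ :=
      exists_add_of_generic_join hP hTc hv hp hpz
    have hvx' : v = a + (a' + (b + b')) := hvx.trans (add_add_add_comm a b a' b' |>.trans
      (add_assoc _ _ _))
    have h1 : v ∈ sumsOf S (j + 1 + 1) := by
      rw [sumsOf_succ, sumsOf_succ, hvx']
      exact Set.add_mem_add ha (Set.add_mem_add ha' (hL _ (L.add_mem hb hb')))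
    exact sumsOf_mono h0 (by omega) h1

lemma mem_sumsOf_of_notMem_zClosure [IsAlgClosed F] [CharZero F] [Fintype σ] {S : Set (σ → F)}
    (hSc : IsCone S) (hspan : Submodule.span F S = ⊤) (hP : IsParam S) {v : σ → F}
    (hv : v ∉ zClosure S) (l : LTSeries (IrrClosed F σ)) (hl : l.last.1 ⊆ zClosure S) {c : ℕ}
    (hcard : Fintype.card σ ≤ l.length + c) : v ∈ sumsOf S (c + 1) := by
  have hS : S + ((⊥ : Submodule F (σ → F)) : Set (σ → F)) = S := by simp
  have := mem_sumsOf_of_chain (v := v) hSc hspan c ⊥ 0 (by simp [sumsOf_zero]) (hS.symm ▸ hP)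
    (by rwa [hS]) l (by rwa [hS]) hcard
  simpa using this
end

/-- Proposition of the paper. If `σ_k(X)` has codimension `c` in `ℙⁿ`
(so its affine cone has dimension `n + 1 - c`) and `s` is the maximum `X`-rank of points
of `σ_k(X)`, then the maximum `X`-rank is at most `max {s, (c+1)k}`. -/
theorem stmt_5 {F : Type*} [Field F] [IsAlgClosed F] [CharZero F] {n : ℕ}
    (Xhat : Set (Fin (n + 1) → F))
    (hclosed : IsZClosed Xhat) (hcone : IsCone Xhat)
    (hirr : IsZIrreducible Xhat) (hnondeg : Submodule.span F Xhat = ⊤)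
    (k c : ℕ) (hc : c ≤ n)
    (hdim : zDim (secantCone Xhat k) = ((n + 1 - c : ℕ) : ℕ∞))
    (s : ℕ∞)
    (hs : IsGreatest
      {m : ℕ∞ | ∃ v ∈ secantCone Xhat k, v ≠ 0 ∧ xRank Xhat v = m} s)
    (rmax : ℕ∞)
    (hmax : IsGreatest {m : ℕ∞ | ∃ v : Fin (n + 1) → F, v ≠ 0 ∧ xRank Xhat v = m} rmax) :
    rmax ≤ max s (((c + 1) * k : ℕ) : ℕ∞) := by
  obtain ⟨v, hv0, rfl⟩ := hmax.1
  by_cases hv : v ∈ secantCone Xhat k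
  · exact le_max_of_le_left (hs.2 ⟨v, hv, hv0, rfl⟩)
  refine le_max_of_le_right ?_
  have h0 : (0 : Fin (n + 1) → F) ∈ Xhat := by
    obtain ⟨x, hx⟩ := hirr.1
    simpa using hcone 0 x hx
  have hsec : secantCone Xhat k = zClosure (sumsOf Xhat k) := by
    simp only [secantCone, xRank_le_iff h0]
    rfl
  rw [xRank_le_iff h0, sumsOf_mul]
  have hk : k ≠ 0 := by
    -- the secant cone contains a nonzero vector
    rintro rfl
    obtain ⟨w, hw, hw0, -⟩ := hs.1
    rw [hsec, sumsOf_zero] at hw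
    refine hw0 (zClosure_subset (C := {0}) ⟨Set.range X, ?_⟩ subset_rfl hw)
    ext x
    simp [zLocus, funext_iff]
  have hXS : Xhat ⊆ sumsOf Xhat k := by
    have h1 : sumsOf Xhat 1 = Xhat := by rw [sumsOf_succ, sumsOf_zero]; simp
    calc Xhat = sumsOf Xhat 1 := h1.symm
      _ ⊆ _ := sumsOf_mono h0 (Nat.one_le_iff_ne_zero.2 hk)
  have hX : IsParam Xhat :=
    ⟨Fin (n + 1), inferInstance, Xhat, X, hclosed, hirr, by simp⟩
  obtain ⟨l, hl⟩ := Order.le_krullDim_iff.1 hdim.ge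
  let g : {C : Set (Fin (n + 1) → F) // IsZClosed C ∧ IsZIrreducible C ∧ C ⊆ secantCone Xhat k} →
    IrrClosed F (Fin (n + 1)) := fun C => ⟨C.1, C.2.1, C.2.2.1⟩
  have hg : StrictMono g := fun _ _ h => h
  refine mem_sumsOf_of_notMem_zClosure (hcone.sumsOf k)
    (top_le_iff.1 (hnondeg ▸ Submodule.span_mono hXS)) (hX.sumsOf k) (by rwa [← hsec])
    (l.map g hg) ?_ ?_
  · rw [← hsec, LTSeries.last_map]
    exact l.last.2.2.2
  · rw [Fintype.card_fin, show (l.map g hg).length = n + 1 - c from hl]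
    omega
end

section
/- Let n ≥ 1. Every nonzero tensor in (ℂ²)^{⊗n} = ℂ² ⊗ ⋯ ⊗ ℂ² (n factors) has tensor rank at most 2·⌈2ⁿ/(n+1)⌉, and every nonzero real tensor in (ℝ²)^{⊗n} has real tensor rank at most 2·⌈2ⁿ/(n+1)⌉. -/
/-!
The bound follows from an explicit construction with binary Hamming codes, uniformly for `ℝ` and
`ℂ`, and does not use the value of the generic rank.

Let `C ⊆ {0,1}^m` be a code of covering radius one. The tangent spaces of the Segre variety at the
coordinate tensors `e_c`, `c ∈ C`, span the whole space `(𝕜²)^{⊗m}`, so the map "sum of `|C|` rank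
one tensors" is open at `(e_c)_c` (`map_nhds_rankOneSum`). After rescaling, for any finite set of
tensors `f` there is a single scalar `μ` such that every `f + μ ∑ e_c` has rank at most `|C|`
(`exists_common_shift`).

For `n = k + m`, a tensor in `(𝕜²)^{⊗n}` has `2ᵏ` slices in `(𝕜²)^{⊗m}`. Shifting all the slices
by the same `μ ∑ e_c` costs only `|C|` extra rank one terms, because `∑ₓ eₓ = (1,1)^{⊗k}` is
decomposable. Hence the rank is at most `(2ᵏ + 1) |C|` (`exists_decomp_sum`). Taking for `C` the
Hamming code of the largest length `m = 2ʲ - 1 ≤ n`, for which `|C| 2ʲ = 2ᵐ`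
(`exists_covering_code`), this is at most `2 ⌈2ⁿ/(n+1)⌉` (`card_bound`).
-/

/-- The rank of a tensor `T` in a tensor product of modules: the least `r` such that `T`
is a sum of `r` decomposable (rank one) tensors (`⊤` if no such expression exists). -/
noncomputable def tensorRank (R : Type*) [CommSemiring R] {ι : Type*}
    (V : ι → Type*) [∀ i, AddCommMonoid (V i)] [∀ i, Module R (V i)]
    (T : PiTensorProduct R V) : ℕ∞ :=
  sInf {r : ℕ∞ | ∃ s : ℕ, r = s ∧ ∃ v : Fin s → (Π i, V i),
    T = ∑ j, PiTensorProduct.tprod R (v j)}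

section

open Finset Filter Topology

/-- `C` is a binary code of covering radius at most one: every word agrees with some codeword
away from a single position `i`. (In particular, such a code forces `ι` to be nonempty.) -/
def IsCoveringCode {ι : Type*} (C : Finset (ι → Fin 2)) : Prop :=
  ∀ y : ι → Fin 2, ∃ c ∈ C, ∃ i, ∀ l, l ≠ i → y l = c l

theorem prod_ite_apply_eq {R ι : Type*} [CommSemiring R] [Fintype ι] (y c : ι → Fin 2) :
    (∏ i, if y i = c i then (1 : R) else 0) = if y = c then 1 else 0 := by
  simp [Finset.prod_ite_zero, funext_iff]

/-- The binary Hamming code, with positions indexed by the nonzero vectors `v` of `𝔽₂ʲ`. It is the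
kernel of `y ↦ ∑ y_v v`; a word with nonzero syndrome `s` becomes a codeword after flipping
position `s`. -/
theorem exists_covering_code (j : ℕ) :
    ∃ C : Finset ({v : Fin j → ZMod 2 // v ≠ 0} → Fin 2),
      C.card * 2 ^ j = 2 ^ (2 ^ j - 1) ∧
      (1 ≤ j → IsCoveringCode C) := by
  classical
  let H : ({v : Fin j → ZMod 2 // v ≠ 0} → ZMod 2) →+ (Fin j → ZMod 2) :=
    { toFun := fun y => ∑ i, y i • i.1
      map_zero' := by simp
      map_add' := fun a b => by simp [add_smul, Finset.sum_add_distrib] }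
  have Hsingle : ∀ i, H (Pi.single i 1) = i.1 := by
    intro i
    change ∑ l, (Pi.single i (1 : ZMod 2) : _ → ZMod 2) l • l.1 = i.1
    rw [Finset.sum_eq_single i] <;> simp +contextual
  have Hsurj : Function.Surjective H := by
    intro s
    by_cases hs : s = 0
    · exact ⟨0, by simp [hs]⟩
    · exact ⟨_, Hsingle ⟨s, hs⟩⟩
  have hcov : 1 ≤ j → ∀ y : {v : Fin j → ZMod 2 // v ≠ 0} → ZMod 2,
      ∃ c : {v : Fin j → ZMod 2 // v ≠ 0} → ZMod 2, H c = 0 ∧ ∃ i, ∀ l, l ≠ i → y l = c l := by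
    intro hj y
    by_cases hs : H y = 0
    · refine ⟨y, hs, ⟨fun _ => 1, ?_⟩, fun _ _ => rfl⟩
      intro h
      have := congrFun h ⟨0, hj⟩
      simp at this
    · refine ⟨y + Pi.single ⟨H y, hs⟩ 1, ?_, ⟨H y, hs⟩, fun l hl => ?_⟩
      · rw [map_add, Hsingle]
        funext l
        exact CharTwo.add_self_eq_zero _
      · rw [Pi.add_apply, Pi.single_eq_of_ne hl, add_zero]
  refine ⟨(Finset.univ.filter fun y : {v : Fin j → ZMod 2 // v ≠ 0} → ZMod 2 => H y = 0), ?_, ?_⟩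
  · have h1 := H.ker.card_eq_card_quotient_mul_card_addSubgroup
    rw [Nat.card_congr (QuotientAddGroup.quotientKerEquivOfSurjective H Hsurj).toEquiv] at h1
    have h2 : Nat.card H.ker =
        (Finset.univ.filter fun y : {v : Fin j → ZMod 2 // v ≠ 0} → ZMod 2 => H y = 0).card := by
      rw [Nat.card_eq_fintype_card]
      exact Fintype.card_of_subtype _ (by simp [AddMonoidHom.mem_ker])
    have h3 : Fintype.card {v : Fin j → ZMod 2 // v ≠ 0} = 2 ^ j - 1 := by
      rw [Fintype.card_subtype_compl]
      simp [ZMod.card]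
    rw [h2] at h1
    simp only [Nat.card_eq_fintype_card, Fintype.card_fun, ZMod.card, Fintype.card_fin, h3] at h1
    exact (mul_comm _ _).trans h1.symm
  · intro hj y
    obtain ⟨c, hc, i, hi⟩ := hcov hj y
    exact ⟨c, Finset.mem_filter.2 ⟨Finset.mem_univ _, hc⟩, i, hi⟩

variable {𝕜 : Type*} [RCLike 𝕜]

/-- The map sending a family of `|C|` rank one tensors (given by their factors) to its sum is open
at the family of coordinate tensors `e_c`, `c ∈ C`: the tangent space at `e_c` contains every `e_y`
with `y` at distance at most one from `c`, so the derivative is onto. -/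
theorem map_nhds_rankOneSum {ι : Type*} [Fintype ι] [DecidableEq ι] (C : Finset (ι → Fin 2))
    (hC : IsCoveringCode C) :
    Filter.map (fun (u : C → ι → Fin 2 → 𝕜) (y : ι → Fin 2) => ∑ c, ∏ i, u c i (y i))
      (𝓝 fun c i l => if l = c.1 i then 1 else 0) =
      𝓝 (fun y => if y ∈ C then 1 else 0) := by
  classical
  set E : C → ι → Fin 2 → 𝕜 := fun c i l => if l = c.1 i then 1 else 0 with hE
  let pr : C → ι → Fin 2 → ((C → ι → Fin 2 → 𝕜) →L[𝕜] 𝕜) := fun c i l =>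
    (ContinuousLinearMap.proj l).comp ((ContinuousLinearMap.proj i).comp
      (ContinuousLinearMap.proj (R := 𝕜) (φ := fun _ : C => ι → Fin 2 → 𝕜) c))
  let D : (C → ι → Fin 2 → 𝕜) →L[𝕜] ((ι → Fin 2) → 𝕜) :=
    ContinuousLinearMap.pi fun y =>
      ∑ c, ∑ i, (∏ l ∈ Finset.univ.erase i, E c l (y l)) • pr c i (y i)
  have hD : HasStrictFDerivAt
      (fun (u : C → ι → Fin 2 → 𝕜) (y : ι → Fin 2) => ∑ c, ∏ i, u c i (y i)) D E := by
    refine hasStrictFDerivAt_pi.2 fun y => ?_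
    refine HasStrictFDerivAt.fun_sum fun c _ => ?_
    exact HasStrictFDerivAt.finsetProd fun i _ => (pr c i (y i)).hasStrictFDerivAt
  have hsurj : D.range = ⊤ := by
    rw [eq_top_iff, ← (Pi.basisFun 𝕜 (ι → Fin 2)).span_eq, Submodule.span_le]
    rintro _ ⟨y₀, rfl⟩
    obtain ⟨c, hc, i, hi⟩ := hC y₀
    refine ⟨Pi.single ⟨c, hc⟩ (Pi.single i (Pi.single (y₀ i) 1)), ?_⟩
    ext y
    simp only [D, pr, Pi.basisFun_apply, ContinuousLinearMap.coe_coe, ContinuousLinearMap.pi_apply,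
      _root_.sum_apply, _root_.smul_apply,
      ContinuousLinearMap.comp_apply, ContinuousLinearMap.proj_apply]
    rw [Finset.sum_eq_single ⟨c, hc⟩ (fun b _ hb => by simp [Pi.single_eq_of_ne hb]) (by simp),
      Finset.sum_eq_single i (fun b _ hb => by simp [Pi.single_eq_of_ne hb]) (by simp)]
    simp only [Pi.single_eq_same, hE, Pi.single_apply, smul_eq_mul, Finset.prod_ite_zero,
      Finset.prod_const_one]
    have : y = y₀ ↔ (∀ l ∈ Finset.univ.erase i, y l = c l) ∧ y i = y₀ i := by
      constructor
      · rintro rfl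
        exact ⟨fun l hl => hi l (Finset.ne_of_mem_erase hl), rfl⟩
      · rintro ⟨h1, h2⟩
        funext l
        by_cases hl : l = i
        · rw [hl, h2]
        · rw [h1 l (Finset.mem_erase.2 ⟨hl, Finset.mem_univ _⟩), hi l hl]
    by_cases h1 : ∀ l ∈ Finset.univ.erase i, y l = c l <;> by_cases h2 : y i = y₀ i <;>
      simp only [this, h1, h2] <;> simp
  rw [hD.map_nhds_eq_of_surj hsurj]
  congr 1
  funext y
  simp only [hE, prod_ite_apply_eq]
  by_cases hy : y ∈ C
  · rw [if_pos hy, Finset.sum_eq_single ⟨y, hy⟩ (fun b _ hb => if_neg ?_) (by simp), if_pos rfl]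
    rintro rfl
    exact hb rfl
  · rw [if_neg hy]
    refine Finset.sum_eq_zero fun b _ => if_neg ?_
    rintro rfl
    exact hy b.2

/-- Finitely many tensors become sums of `|C|` rank one tensors after adding one and the same
multiple of `∑ c ∈ C, e_c`. The index `i₀` only marks the factor that absorbs scalars. -/
theorem exists_common_shift {ι X : Type*} [Fintype ι] [DecidableEq ι] [Finite X] (i₀ : ι)
    (C : Finset (ι → Fin 2)) (hC : IsCoveringCode C)
    (f : X → (ι → Fin 2) → 𝕜) :
    ∃ μ : 𝕜, ∃ u : X → C → ι → Fin 2 → 𝕜, ∀ x y,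
      f x y + μ * (if y ∈ C then 1 else 0) = ∑ c, ∏ i, u x c i (y i) := by
  classical
  have key : ∀ x, ∀ᶠ t : 𝕜 in 𝓝 0, ∃ u : C → ι → Fin 2 → 𝕜, ∀ y,
      (if y ∈ C then 1 else 0) + t * f x y = ∑ c, ∏ i, u c i (y i) := by
    intro x
    have hc : Tendsto (fun (t : 𝕜) (y : ι → Fin 2) => (if y ∈ C then 1 else 0) + t * f x y)
        (𝓝 0) (𝓝 (fun y => if y ∈ C then 1 else 0)) := by
      refine tendsto_pi_nhds.2 fun y => ?_
      have : Continuous fun t : 𝕜 => (if y ∈ C then 1 else 0) + t * f x y := by fun_prop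
      simpa using this.tendsto 0
    rw [← map_nhds_rankOneSum C hC] at hc
    filter_upwards [hc (Filter.range_mem_map)] with t ht
    obtain ⟨u, hu⟩ := ht
    exact ⟨u, fun y => (congrFun hu y).symm⟩
  -- One nonzero `t` serves all `x`; dividing by it turns `e_C + t f` into `f + t⁻¹ e_C`.
  obtain ⟨t, ht, ht0⟩ := (((eventually_all.2 key).filter_mono nhdsWithin_le_nhds).and
    (self_mem_nhdsWithin : {(0 : 𝕜)}ᶜ ∈ 𝓝[≠] 0)).exists
  choose u hu using ht
  have ht0 : t ≠ 0 := ht0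
  refine ⟨t⁻¹, fun x c i l => (if i = i₀ then t⁻¹ else 1) * u x c i l, fun x y => ?_⟩
  simp only [Finset.prod_mul_distrib, Finset.prod_ite_eq', Finset.mem_univ, if_true,
    ← Finset.mul_sum, ← hu]
  field_simp
  ring

/-- Slicing along the factors in `κ`: each of the `2 ^ |κ|` slices, shifted by `μ ∑ e_c`, costs
`|C|` rank one tensors, and the shifts together form the tensor
`μ ∑ c, (1, 1) ⊗ ⋯ ⊗ (1, 1) ⊗ e_c`, which costs only `|C|` more. -/
theorem exists_decomp_sum {κ ι : Type*} [Fintype κ] [DecidableEq κ] [Fintype ι] [DecidableEq ι]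
    (i₀ : ι) (C : Finset (ι → Fin 2)) (hC : IsCoveringCode C)
    (f : (κ ⊕ ι → Fin 2) → 𝕜) :
    ∃ v : ((κ → Fin 2) × C) ⊕ C → κ ⊕ ι → Fin 2 → 𝕜, ∀ y, f y = ∑ a, ∏ i, v a i (y i) := by
  classical
  obtain ⟨μ, u, hu⟩ := exists_common_shift i₀ C hC fun (x : κ → Fin 2) y => f (Sum.elim x y)
  refine ⟨Sum.elim
    (fun p => Sum.elim (fun i l => if l = p.1 i then 1 else 0) (u p.1 p.2))
    (fun c => Sum.elim (fun _ _ => 1)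
      (fun i l => (if i = i₀ then -μ else 1) * if l = c.1 i then 1 else 0)), fun y => ?_⟩
  obtain ⟨⟨x, z⟩, rfl⟩ := (Equiv.sumArrowEquivProdArrow κ ι (Fin 2)).symm.surjective y
  simp only [Equiv.sumArrowEquivProdArrow, Equiv.coe_fn_symm_mk, Fintype.sum_sum_type,
    Fintype.prod_sum_type, Sum.elim_inl, Sum.elim_inr, Fintype.sum_prod_type, prod_ite_apply_eq,
    Finset.prod_const_one, Finset.mem_univ, Finset.prod_mul_distrib, Finset.prod_ite_eq', if_true, one_mul, ← Finset.mul_sum]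
  have h1 : (∑ c : C, if z = c.1 then (1 : 𝕜) else 0) = if z ∈ C then 1 else 0 := by
    rw [Finset.sum_coe_sort C (fun c => if z = c then (1 : 𝕜) else 0)]
    simp
  rw [h1, Finset.sum_eq_single x (fun b _ hb => by simp [hb.symm]) (by simp)]
  simp only [if_true, one_mul, ← hu]
  ring

/-- The count `(2ᵏ + 1) c` for the Hamming code of length `2ʲ - 1` with `c` words. Except for
`n = 2` it is even at most `2 ^ (n + 1) / (n + 1)`, without rounding up. -/
theorem card_bound {j k n c : ℕ} (hj : 1 ≤ j) (hk : k < 2 ^ j) (hn : n + 1 = 2 ^ j + k)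
    (hc : c * 2 ^ j = 2 ^ (2 ^ j - 1)) :
    2 ^ k * c + c ≤ 2 * ((2 ^ n + n) / (n + 1)) := by
  have hceil : 2 ^ n ≤ (n + 1) * ((2 ^ n + n) / (n + 1)) := by
    have h1 := Nat.div_add_mod (2 ^ n + n) (n + 1)
    have h2 := Nat.mod_lt (2 ^ n + n) (Nat.succ_pos n)
    simp only [Nat.succ_eq_add_one] at h2
    omega
  have hn2 : 2 ^ n = 2 ^ k * (c * 2 ^ j) := by
    rw [hc, ← pow_add]
    congr 1
    omega
  by_cases h2 : n = 2
  · subst h2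
    have hj1 : j = 1 := by
      by_contra h
      have : 2 ^ 2 ≤ 2 ^ j := Nat.pow_le_pow_right (by norm_num) (by omega)
      omega
    subst hj1
    have hk1 : k = 1 := by omega
    subst hk1
    norm_num at hc ⊢
    omega
  -- `d + 1 = 2 ^ j - k`; the inequality `main` is `h3` with `2 ^ k * (2 * k + d + 1)` added to both sides.
  obtain ⟨d, hd⟩ := Nat.exists_eq_add_of_lt hk
  have main : (2 ^ k + 1) * (2 ^ j + k) ≤ 2 * 2 ^ k * 2 ^ j := by
    have h3 : 2 * k + (d + 1) ≤ 2 ^ k * (d + 1) := by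
      rcases k with _ | _ | _ | k
      · simp
      · have : 2 ^ 1 ≤ 2 ^ j := Nat.pow_le_pow_right (by norm_num) hj
        omega
      · have : d ≠ 0 := by
          rintro rfl
          have : 2 ∣ 2 ^ j := dvd_pow_self 2 (by omega)
          omega
        omega
      · have : 2 * (k + 3) + 1 ≤ 2 ^ (k + 3) := by
          clear * -
          induction k with
          | zero => norm_num
          | succ k ih => rw [show k + 1 + 3 = (k + 3) + 1 by ring, pow_succ]; omega
        nlinarith
    rw [hd]
    nlinarith
  refine Nat.le_of_mul_le_mul_left ?_ (Nat.succ_pos n)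
  calc (n + 1) * (2 ^ k * c + c) = c * ((2 ^ k + 1) * (2 ^ j + k)) := by rw [hn]; ring
    _ ≤ c * (2 * 2 ^ k * 2 ^ j) := Nat.mul_le_mul_left _ main
    _ = 2 * 2 ^ n := by rw [hn2]; ring
    _ ≤ _ := by nlinarith

/-- The rank bound in coordinates. Here `2ʲ` is the largest power of two below or equal to `n + 1`,
the Hamming code lives on `2ʲ - 1` of the factors and the tensor is sliced along the other `k`. -/
theorem exists_decomp (n : ℕ) (hn : 1 ≤ n) (f : (Fin n → Fin 2) → 𝕜) :
    ∃ s ≤ 2 * ((2 ^ n + n) / (n + 1)), ∃ v : Fin s → Fin n → Fin 2 → 𝕜,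
      ∀ y, f y = ∑ a, ∏ i, v a i (y i) := by
  classical
  obtain ⟨j, hj⟩ : ∃ j, j = Nat.log 2 (n + 1) := ⟨_, rfl⟩
  have hlow : 2 ^ j ≤ n + 1 := hj ▸ Nat.pow_log_le_self 2 (by omega)
  have hup : n + 1 < 2 ^ (j + 1) := hj ▸ Nat.lt_pow_succ_log_self (by norm_num) _
  have hj1 : 1 ≤ j := by
    rcases j with _ | j
    · norm_num at hup; omega
    · omega
  obtain ⟨k, hk⟩ := Nat.exists_eq_add_of_le hlow
  obtain ⟨C, hcard, hC⟩ := exists_covering_code j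
  have hι : Fintype.card {v : Fin j → ZMod 2 // v ≠ 0} = 2 ^ j - 1 := by
    rw [Fintype.card_subtype_compl]
    simp [ZMod.card]
  have hpos : 1 ≤ 2 ^ j := Nat.one_le_two_pow
  let e : Fin k ⊕ {v : Fin j → ZMod 2 // v ≠ 0} ≃ Fin n := Fintype.equivOfCardEq (by
    simp only [Fintype.card_sum, Fintype.card_fin, hι]
    omega)
  obtain ⟨v, hv⟩ := exists_decomp_sum (κ := Fin k) ((hC hj1 0).choose_spec.2.choose) C (hC hj1)
    fun y => f (y ∘ e.symm)
  let g := Fintype.equivFin (((Fin k → Fin 2) × C) ⊕ C)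
  refine ⟨Fintype.card (((Fin k → Fin 2) × C) ⊕ C), ?_, fun a i => v (g.symm a) (e.symm i), ?_⟩
  · simp only [Fintype.card_sum, Fintype.card_prod, Fintype.card_fun, Fintype.card_fin,
      Fintype.card_coe]
    exact card_bound hj1 (by rw [pow_succ] at hup; omega) hk hcard
  · intro y
    have := hv (y ∘ e)
    rw [Function.comp_assoc, e.self_comp_symm, Function.comp_id] at this
    rw [this, ← g.symm.sum_comp]
    refine Finset.sum_congr rfl fun a _ => ?_
    rw [← e.symm.prod_comp]
    simp

theorem tensorRank_le (n : ℕ) (hn : 1 ≤ n)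
    (T : PiTensorProduct 𝕜 (fun _ : Fin n => Fin 2 → 𝕜)) :
    tensorRank 𝕜 (fun _ : Fin n => Fin 2 → 𝕜) T ≤
      ((2 * ((2 ^ n + n) / (n + 1)) : ℕ) : ℕ∞) := by
  classical
  let e : (Fin n → Fin 2) → PiTensorProduct 𝕜 (fun _ : Fin n => Fin 2 → 𝕜) := fun y =>
    PiTensorProduct.tprod 𝕜 fun i => Pi.single (y i) 1
  have htprod : ∀ w : Fin n → Fin 2 → 𝕜,
      PiTensorProduct.tprod 𝕜 w = ∑ y, (∏ i, w i (y i)) • e y := by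
    intro w
    have h : w = fun i => ∑ l, w i l • (Pi.single l 1 : Fin 2 → 𝕜) := by
      funext i
      exact pi_eq_sum_univ' (w i)
    conv_lhs => rw [h]
    rw [MultilinearMap.map_sum]
    exact Finset.sum_congr rfl fun y _ => MultilinearMap.map_smul_univ _ _ _
  obtain ⟨f, hf⟩ : ∃ f : (Fin n → Fin 2) → 𝕜, T = ∑ y, f y • e y := by
    induction T using PiTensorProduct.induction_on with
    | smul_tprod r w =>
      exact ⟨fun y => r * ∏ i, w i (y i), by simp [htprod, Finset.smul_sum, mul_smul]⟩
    | add a b ha hb =>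
      obtain ⟨f, rfl⟩ := ha
      obtain ⟨g, rfl⟩ := hb
      exact ⟨f + g, by simp [add_smul, Finset.sum_add_distrib]⟩
  obtain ⟨s, hs, v, hv⟩ := exists_decomp n hn f
  refine le_trans (sInf_le ⟨s, rfl, v, ?_⟩) (Nat.cast_le.2 hs)
  simp only [hf, htprod, hv, Finset.sum_smul]
  exact Finset.sum_comm

end

/-- Every nonzero tensor in `(ℂ²)^{⊗n}` has rank at most
`2⌈2ⁿ/(n+1)⌉`, and likewise for real tensors in `(ℝ²)^{⊗n}`. -/
theorem stmt_10 (n : ℕ) (hn : 1 ≤ n) :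
    (∀ T : PiTensorProduct ℂ (fun _ : Fin n => Fin 2 → ℂ), T ≠ 0 →
      tensorRank ℂ (fun _ : Fin n => Fin 2 → ℂ) T ≤
        ((2 * ((2 ^ n + n) / (n + 1)) : ℕ) : ℕ∞)) ∧
    (∀ T : PiTensorProduct ℝ (fun _ : Fin n => Fin 2 → ℝ), T ≠ 0 →
      tensorRank ℝ (fun _ : Fin n => Fin 2 → ℝ) T ≤
        ((2 * ((2 ^ n + n) / (n + 1)) : ℕ) : ℕ∞)) := by
  exact ⟨fun T _ => tensorRank_le n hn T, fun T _ => tensorRank_le n hn T⟩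
end

section
/- Let k, d ≥ 1. Every complex homogeneous form of degree kd in n+1 variables is a sum of at most 2kⁿ k-th powers of complex homogeneous forms of degree d, and every real homogeneous form of degree kd in n+1 variables is a real linear combination (possibly with negative coefficients) of at most 2kⁿ k-th powers of real homogeneous forms of degree d. -/
open MvPolynomial

/-!
Let `N = kⁿ` and let `L_a = x₀ + a₁x₁ + ⋯ + aₙxₙ` for `a` in the grid `{0, …, k-1}ⁿ`.

**Tangent space.** The forms `L_a ^ ((k-1)d) * h_a` with `h_a` of degree `d` span all forms of degree
`kd` (`spanning`), over any field of characteristic zero. By duality, let a functional `l` kill all of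
them. Then the polynomial `F(y) = l((x₀ + y₁x₁ + ⋯ + yₙxₙ) ^ (kd))` has degree at most `kd` and
vanishes to order at least `d + 1` at each grid point. A polynomial of degree `< km` vanishing to
order `m` on a grid with sides of size `k` is zero (`eq_zero_of_vanish_on_grid`): by induction on the
number of variables it vanishes on each hyperplane `y₁ = j`, so it is divisible by `∏ⱼ (y₁ - j)`, and
the quotient has degree `< k(m-1)` and vanishes to order `m - 1`. So `F = 0`, and `l` is zero on forms
of degree `kd`, since the coefficients of `F` are nonzero multiples of the values of `l` on monomials.

**Open image.** Hence the map `(g_a) ↦ ∑ g_a ^ k` on `N`-tuples of `d`-forms has surjective derivative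
at `(L_a ^ d)`, and by the inverse function theorem its image contains a neighbourhood of
`f₀ = ∑ L_a ^ (kd)`.

**Doubling.** For any `f` of degree `kd` and small `ε ≠ 0`, both `f₀ + ε f` and `f₀` are sums of `N`
`k`-th powers, so `f = ε⁻¹ ((f₀ + ε f) - f₀)` is a linear combination of `2N` of them (`core`,
`combo`). Over `ℂ` the coefficients are `k`-th powers themselves.
-/

/-! ### Polynomials vanishing to high order on a grid -/

/-- The expansion `p(a + t X)` of `p` at `a` in a generic direction `X`, as a polynomial in `t`. The
polynomial `p` vanishes to order at least `m` at `a` when `t ^ m` divides it. -/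
noncomputable def localExpansion {σ 𝕜 : Type*} [Field 𝕜] (a : σ → 𝕜) :
    MvPolynomial σ 𝕜 →ₐ[𝕜] Polynomial (MvPolynomial σ 𝕜) :=
  aeval fun i => Polynomial.C (C (a i)) + Polynomial.X * Polynomial.C (X i)

lemma totalDegree_aeval_le {σ τ 𝕜 : Type*} [Field 𝕜] (u : σ → MvPolynomial τ 𝕜)
    (hu : ∀ i, (u i).totalDegree ≤ 1) (p : MvPolynomial σ 𝕜) :
    (aeval u p).totalDegree ≤ p.totalDegree := by
  rw [aeval_def, eval₂_eq]
  refine totalDegree_finsetSum_le fun γ hγ => ?_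
  refine (totalDegree_mul _ _).trans ?_
  rw [algebraMap_eq, totalDegree_C, zero_add]
  refine (totalDegree_finsetProd _ _).trans ?_
  refine le_trans (Finset.sum_le_sum fun i _ => ?_) (le_totalDegree hγ)
  exact (totalDegree_pow _ _).trans (by simpa using Nat.mul_le_mul_left (γ i) (hu i))

lemma totalDegree_X_sub_const {σ 𝕜 : Type*} [Field 𝕜] (i : σ) (a : 𝕜) :
    (X i - C a : MvPolynomial σ 𝕜).totalDegree = 1 := by
  rw [sub_eq_add_neg, ← C_neg, totalDegree_add_eq_left_of_totalDegree_lt] <;> simp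

lemma totalDegree_prod_X_sub_const {ι σ 𝕜 : Type*} [Field 𝕜] (s : Finset ι) (i : σ) (α : ι → 𝕜) :
    (∏ j ∈ s, (X i - C (α j)) : MvPolynomial σ 𝕜).totalDegree = s.card := by
  classical
  have hne : ∀ j, (X i - C (α j) : MvPolynomial σ 𝕜) ≠ 0 := fun j h => by
    simpa [h] using totalDegree_X_sub_const i (α j)
  induction s using Finset.induction_on with
  | empty => simp
  | insert j s hj ih =>
    rw [Finset.prod_insert hj, totalDegree_mul_of_isDomain (hne j)
      (Finset.prod_ne_zero_iff.2 fun j _ => hne j), ih, totalDegree_X_sub_const,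
      Finset.card_insert_of_notMem hj, add_comm]

/-- Restriction of a polynomial to the hyperplane where the first variable equals `c`. -/
noncomputable def restrict {n : ℕ} {𝕜 : Type*} [Field 𝕜] (c : 𝕜) :
    MvPolynomial (Fin (n + 1)) 𝕜 →ₐ[𝕜] MvPolynomial (Fin n) 𝕜 :=
  aeval (Fin.cons (C c) X)

lemma dvd_of_restrict_eq_zero {n : ℕ} {𝕜 : Type*} [Field 𝕜] (c : 𝕜)
    (p : MvPolynomial (Fin (n + 1)) 𝕜) (h : restrict c p = 0) : X 0 - C c ∣ p := by
  let I := Ideal.span {(X 0 - C c : MvPolynomial (Fin (n + 1)) 𝕜)}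
  have key : (Ideal.Quotient.mkₐ 𝕜 I) =
      ((Ideal.Quotient.mkₐ 𝕜 I).comp (rename Fin.succ)).comp (restrict c) := by
    ext i
    refine Fin.cases ?_ (fun i => ?_) i
    · simp only [restrict, AlgHom.comp_apply, aeval_X, Fin.cons_zero, rename_C]
      exact (Ideal.Quotient.mk_eq_mk_iff_sub_mem _ _).2 (Ideal.mem_span_singleton_self _)
    · simp [restrict]
  have h1 := DFunLike.congr_fun key p
  simp only [AlgHom.comp_apply, h, map_zero] at h1
  exact Ideal.mem_span_singleton.1 (Ideal.Quotient.eq_zero_iff_mem.1 h1)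

/-- Restriction commutes with expansion at a point of the hyperplane, so it does not lower the order
of vanishing. -/
lemma localExpansion_restrict {n : ℕ} {𝕜 : Type*} [Field 𝕜] (c : 𝕜) (a : Fin n → 𝕜)
    (p : MvPolynomial (Fin (n + 1)) 𝕜) :
    localExpansion a (restrict c p) =
      Polynomial.mapAlgHom (restrict 0) (localExpansion (Fin.cons c a) p) := by
  have : (localExpansion a).comp (restrict c) =
      (Polynomial.mapAlgHom (restrict 0)).comp (localExpansion (Fin.cons c a)) := by
    ext1 i
    refine Fin.cases ?_ (fun i => ?_) i
    · simp [localExpansion, restrict, Polynomial.algebraMap_apply]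
    · simp [localExpansion, restrict]
  exact DFunLike.congr_fun this p

/-- A polynomial of degree less than `k * m` that vanishes to order `m` at all points of a grid with
sides of size `k` is zero. -/
theorem eq_zero_of_vanish_on_grid {𝕜 : Type*} [Field 𝕜] {k : ℕ} (α : Fin k → 𝕜)
    (hα : Function.Injective α) :
    ∀ (n m : ℕ) (p : MvPolynomial (Fin n) 𝕜), p.totalDegree < k * m →
      (∀ a : Fin n → Fin k, Polynomial.X ^ m ∣ localExpansion (α ∘ a) p) → p = 0 := by
  intro n
  induction n with
  | zero =>
    intro m p hp h
    have hm : m ≠ 0 := by rintro rfl; simp at hp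
    obtain ⟨c, rfl⟩ := C_surjective (Fin 0) p
    have h1 := (dvd_pow_self _ hm).trans (h Fin.elim0)
    rw [Polynomial.X_dvd_iff] at h1
    simpa [localExpansion, Polynomial.algebraMap_apply] using h1
  | succ n ihn =>
    intro m
    induction m with
    | zero => intro p hp; simp at hp
    | succ m ihm =>
      intro p hp h
      by_contra hp0
      have hdvd : ∀ j, X 0 - C (α j) ∣ p := fun j => by
        refine dvd_of_restrict_eq_zero _ _ (ihn (m + 1) _ (lt_of_le_of_lt ?_ hp) fun a => ?_)
        · refine totalDegree_aeval_le _ (fun i => ?_) p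
          refine Fin.cases ?_ (fun i => ?_) i <;> simp
        · rw [localExpansion_restrict]
          have h1 := map_dvd (Polynomial.mapAlgHom (restrict (𝕜 := 𝕜) (n := n) 0)) (h (Fin.cons j a))
          have h2 : α ∘ (Fin.cons j a : Fin (n + 1) → Fin k) = Fin.cons (α j) (α ∘ a) := by
            ext i; refine Fin.cases ?_ (fun i => ?_) i <;> simp
          rw [h2] at h1
          simpa using h1
      have hg : ∏ j, (X 0 - C (α j)) ∣ p := by
        refine Finset.prod_dvd_of_coprime (fun i _ j _ hij => ?_) fun j _ => hdvd j
        have hne : α j - α i ≠ 0 := sub_ne_zero.2 fun e => hij (hα e.symm)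
        refine ⟨C (α j - α i)⁻¹, -C (α j - α i)⁻¹, ?_⟩
        calc _ = C (α j - α i)⁻¹ * C (α j - α i) := by simp only [map_sub]; ring
          _ = 1 := by rw [← C_mul, inv_mul_cancel₀ hne, C_1]
      obtain ⟨q, rfl⟩ := hg
      have hq0 := right_ne_zero_of_mul hp0
      rw [totalDegree_mul_of_isDomain (left_ne_zero_of_mul hp0) hq0, totalDegree_prod_X_sub_const] at hp
      refine hq0 (ihm q (by simp at hp; linarith) fun a => ?_)
      have h1 := h a
      rw [map_mul, map_prod, ← Finset.mul_prod_erase _ _ (Finset.mem_univ (a 0))] at h1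
      -- The factor `X₀ - α (a 0)` contributes exactly one `t`; the other factors are nonzero at `t = 0`.
      have h2 : localExpansion (α ∘ a) (X 0 - C (α (a 0))) = Polynomial.X * Polynomial.C (X 0) := by
        simp [localExpansion, Polynomial.algebraMap_apply]
      rw [h2, pow_succ', mul_assoc, mul_assoc, mul_dvd_mul_iff_left Polynomial.X_ne_zero] at h1
      have h3 := Polynomial.prime_X.pow_dvd_of_dvd_mul_left m (by
        rw [Polynomial.X_dvd_iff]; simp) h1
      refine Polynomial.prime_X.pow_dvd_of_dvd_mul_left m ?_ h3
      rw [Polynomial.prime_X.dvd_finsetProd_iff]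
      rintro ⟨j, hj, hd⟩
      rw [Polynomial.X_dvd_iff] at hd
      have : C (α (a 0)) - C (α j) = (0 : MvPolynomial (Fin (n + 1)) 𝕜) := by
        simpa [localExpansion, Polynomial.algebraMap_apply] using hd
      rw [← C_sub, C_eq_zero, sub_eq_zero] at this
      exact (Finset.ne_of_mem_erase hj) (hα this).symm

/-! ### The tangent space spans all forms -/

/-- The `B`-linear functional on polynomials over a `𝕜`-algebra `B` whose value on the monomial `x^γ`
is `c γ`; it is the extension of scalars of a `𝕜`-linear functional. -/
noncomputable def extendFunctional {σ 𝕜 : Type*} [Field 𝕜] (c : (σ →₀ ℕ) → 𝕜) (B : Type*) [CommRing B]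
    [Algebra 𝕜 B] : MvPolynomial σ B →ₗ[B] B :=
  (basisMonomials σ B).constr B fun γ => algebraMap 𝕜 B (c γ)

lemma extendFunctional_monomial {σ 𝕜 B : Type*} [Field 𝕜] [CommRing B] [Algebra 𝕜 B] (c : (σ →₀ ℕ) → 𝕜)
    (γ : σ →₀ ℕ) (b : B) : extendFunctional c B (monomial γ b) = b * algebraMap 𝕜 B (c γ) := by
  have h : extendFunctional c B (monomial γ 1) = algebraMap 𝕜 B (c γ) := by
    simpa [extendFunctional] using
      (basisMonomials σ B).constr_basis B (fun γ => algebraMap 𝕜 B (c γ)) γ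
  rw [← h, ← smul_eq_mul, ← map_smul, smul_monomial, smul_eq_mul, mul_one]

lemma extendFunctional_map {σ 𝕜 B B' : Type*} [Field 𝕜] [CommRing B] [Algebra 𝕜 B] [CommRing B']
    [Algebra 𝕜 B'] (c : (σ →₀ ℕ) → 𝕜) (φ : B →ₐ[𝕜] B') (P : MvPolynomial σ B) :
    extendFunctional c B' (map (φ : B →+* B') P) = φ (extendFunctional c B P) := by
  induction P using MvPolynomial.induction_on' with
  | monomial γ b => simp [map_monomial, extendFunctional_monomial]
  | add p q hp hq => simp [hp, hq]

lemma extendFunctional_algebraMap {σ 𝕜 B : Type*} [Field 𝕜] [CommRing B] [Algebra 𝕜 B]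
    (l : MvPolynomial σ 𝕜 →ₗ[𝕜] 𝕜) (P : MvPolynomial σ 𝕜) :
    extendFunctional (fun γ => l (monomial γ 1)) B (map (algebraMap 𝕜 B) P) = algebraMap 𝕜 B (l P) := by
  induction P using MvPolynomial.induction_on' with
  | monomial γ b =>
    rw [map_monomial, extendFunctional_monomial, ← map_mul, ← smul_eq_mul, ← map_smul, smul_monomial,
      smul_eq_mul, mul_one]
  | add p q hp hq => simp [hp, hq]

lemma extendFunctional_mul_eq_zero {σ 𝕜 B : Type*} [Field 𝕜] [CommRing B] [Algebra 𝕜 B]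
    (l : MvPolynomial σ 𝕜 →ₗ[𝕜] 𝕜) (Q : MvPolynomial σ 𝕜) (d : ℕ)
    (hQ : ∀ h : MvPolynomial σ 𝕜, h.IsHomogeneous d → l (Q * h) = 0)
    (H : MvPolynomial σ B) (hH : H.IsHomogeneous d) :
    extendFunctional (fun γ => l (monomial γ 1)) B (map (algebraMap 𝕜 B) Q * H) = 0 := by
  rw [H.as_sum, Finset.mul_sum, map_sum]
  refine Finset.sum_eq_zero fun γ hγ => ?_
  have h1 : map (algebraMap 𝕜 B) Q * monomial γ (coeff γ H) =
      coeff γ H • map (algebraMap 𝕜 B) (Q * monomial γ 1) := by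
    rw [map_mul, map_monomial, map_one, ← mul_smul_comm, smul_monomial, smul_eq_mul, mul_one]
  rw [h1, map_smul, extendFunctional_algebraMap, hQ, map_zero, smul_zero]
  refine isHomogeneous_monomial _ ?_
  rw [Finsupp.degree_eq_weight_one]
  exact hH (mem_support_iff.1 hγ)

/-- The linear form `∑ wᵢ xᵢ`. -/
noncomputable def linearForm {σ B : Type*} [Fintype σ] [CommRing B] (w : σ → B) : MvPolynomial σ B :=
  ∑ i, C (w i) * X i

lemma linearForm_isHomogeneous {σ B : Type*} [Fintype σ] [CommRing B] (w : σ → B) :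
    (linearForm w).IsHomogeneous 1 :=
  IsHomogeneous.sum _ _ _ fun i _ => by
    simpa using (isHomogeneous_C σ (w i)).mul (isHomogeneous_X B i)

lemma linearForm_pow_isHomogeneous {σ B : Type*} [Fintype σ] [CommRing B] (w : σ → B) (m : ℕ) :
    (linearForm w ^ m).IsHomogeneous m := by
  simpa using (linearForm_isHomogeneous w).pow m

lemma map_linearForm {σ B B' : Type*} [Fintype σ] [CommRing B] [CommRing B'] (φ : B →+* B')
    (w : σ → B) : map φ (linearForm w) = linearForm (fun i => φ (w i)) := by
  simp [linearForm]

/-- The polynomial `F(y) = l((x₀ + y₁x₁ + ⋯ + yₙxₙ) ^ D)`, where `l` is the functional with value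
`c γ` on `x^γ`: the dual (inverse system) of `l` in degree `D`, dehomogenized. -/
noncomputable def dualPoly {n : ℕ} {𝕜 : Type*} [Field 𝕜] (c : (Fin (n + 1) →₀ ℕ) → 𝕜) (D : ℕ) :
    MvPolynomial (Fin n) 𝕜 :=
  extendFunctional c (MvPolynomial (Fin n) 𝕜) (linearForm (Fin.cons 1 X) ^ D)

lemma dualPoly_eq {n : ℕ} {𝕜 : Type*} [Field 𝕜] (c : (Fin (n + 1) →₀ ℕ) → 𝕜) (D : ℕ) :
    dualPoly c D = ∑ γ ∈ Finset.piAntidiag (Finset.univ : Finset (Fin (n + 1))) D,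
      monomial (Finsupp.equivFunOnFinite.symm (Fin.tail γ))
        ((Nat.multinomial Finset.univ γ : 𝕜) * c (Finsupp.equivFunOnFinite.symm γ)) := by
  rw [dualPoly, linearForm, Finset.sum_pow_eq_sum_piAntidiag, map_sum]
  refine Finset.sum_congr rfl fun γ _ => ?_
  have h1 : (∏ i, (C ((Fin.cons 1 X : Fin (n + 1) → MvPolynomial (Fin n) 𝕜) i) * X i) ^ γ i) =
      (monomial (Finsupp.equivFunOnFinite.symm γ)
        (monomial (Finsupp.equivFunOnFinite.symm (Fin.tail γ)) (1 : 𝕜))) := by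
    simp_rw [mul_pow, Finset.prod_mul_distrib, ← map_pow, ← map_prod]
    rw [Fin.prod_univ_succ]
    rw [monomial_eq, monomial_eq, Finsupp.prod_fintype _ _ (by simp),
      Finsupp.prod_fintype _ _ (by simp)]
    simp [Fin.tail]
  rw [h1, ← nsmul_eq_mul, map_nsmul, extendFunctional_monomial, algebraMap_eq, mul_comm, C_mul_monomial,
    mul_one, ← nsmul_eq_mul, map_nsmul]

lemma dualPoly_totalDegree {n : ℕ} {𝕜 : Type*} [Field 𝕜] (c : (Fin (n + 1) →₀ ℕ) → 𝕜) (D : ℕ) :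
    (dualPoly c D).totalDegree ≤ D := by
  rw [dualPoly_eq]
  refine totalDegree_finsetSum_le fun γ hγ => (totalDegree_monomial_le _ _).trans ?_
  have h := (Finset.mem_piAntidiag.1 hγ).1
  rw [Fin.sum_univ_succ] at h
  rw [Finsupp.sum_fintype _ _ (by simp)]
  simp only [Finsupp.equivFunOnFinite_symm_apply_apply, Fin.tail, id]
  omega

lemma eq_zero_of_dualPoly_eq_zero {n : ℕ} {𝕜 : Type*} [Field 𝕜] [CharZero 𝕜]
    (c : (Fin (n + 1) →₀ ℕ) → 𝕜) (D : ℕ) (h : dualPoly c D = 0) (γ : Fin (n + 1) →₀ ℕ)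
    (hγ : γ.degree = D) : c γ = 0 := by
  classical
  have h1 := congrArg (coeff (Finsupp.equivFunOnFinite.symm (Fin.tail γ))) h
  rw [dualPoly_eq, coeff_sum, Finset.sum_eq_single (γ : Fin (n + 1) → ℕ)] at h1
  · rw [coeff_monomial, if_pos rfl, coeff_zero] at h1
    have h2 : (Nat.multinomial Finset.univ γ : 𝕜) ≠ 0 :=
      Nat.cast_ne_zero.2 (Nat.multinomial_pos _ _).ne'
    simpa [h2] using h1
  · intro δ hδ hne
    rw [coeff_monomial, if_neg]
    intro he
    have he' : Fin.tail δ = Fin.tail γ := Finsupp.equivFunOnFinite.symm.injective he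
    refine hne ?_
    have hs := (Finset.mem_piAntidiag.1 hδ).1
    rw [← hγ, Finsupp.degree_eq_sum, Fin.sum_univ_succ, Fin.sum_univ_succ] at hs
    -- The exponent of `x₀` is recovered from the total degree and the remaining exponents.
    have h3 : ∀ i : Fin n, δ i.succ = γ i.succ := fun i => congrFun he' i
    funext i
    refine Fin.cases ?_ h3 i
    simpa [h3] using hs
  · intro hn
    exact absurd (Finset.mem_piAntidiag.2 ⟨by rw [← hγ, Finsupp.degree_eq_sum], by simp⟩) hn

/-- If `l` kills the degree-`d` multiples of `L_a ^ e`, its dual polynomial vanishes to order at least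
`d + 1` at `a`: in `l((L_a + t M) ^ (e + d))` the terms with `t`-exponent at most `d` are divisible by
`L_a ^ e`. Here `M` is the linear form `∑ Xᵢ xᵢ` with generic coefficients. -/
lemma dualPoly_dvd {n : ℕ} {𝕜 : Type*} [Field 𝕜] (l : MvPolynomial (Fin (n + 1)) 𝕜 →ₗ[𝕜] 𝕜)
    (a : Fin n → 𝕜) (e d : ℕ)
    (hl : ∀ h : MvPolynomial (Fin (n + 1)) 𝕜, h.IsHomogeneous d →
      l (linearForm (Fin.cons 1 a) ^ e * h) = 0) :
    Polynomial.X ^ (d + 1) ∣ localExpansion a (dualPoly (fun γ => l (monomial γ 1)) (e + d)) := by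
  have h1 : map (localExpansion a : MvPolynomial (Fin n) 𝕜 →+* Polynomial (MvPolynomial (Fin n) 𝕜))
      (linearForm (Fin.cons 1 X : Fin (n + 1) → MvPolynomial (Fin n) 𝕜)) =
      C Polynomial.X * linearForm (Fin.cons (0 : Polynomial (MvPolynomial (Fin n) 𝕜))
        fun i => Polynomial.C (X i)) +
      map (algebraMap 𝕜 (Polynomial (MvPolynomial (Fin n) 𝕜))) (linearForm (Fin.cons 1 a)) := by
    rw [map_linearForm, map_linearForm, linearForm, linearForm, linearForm,
      Finset.mul_sum, ← Finset.sum_add_distrib]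
    refine Finset.sum_congr rfl fun i _ => ?_
    refine Fin.cases ?_ (fun i => ?_) i
    · simp
    · simp [localExpansion, Polynomial.algebraMap_apply]
      ring
  rw [dualPoly, ← extendFunctional_map, map_pow, h1, add_pow, map_sum]
  refine Finset.dvd_sum fun j hj => ?_
  rw [← nsmul_eq_mul', map_nsmul]
  refine dvd_nsmul_of_dvd _ ?_
  rcases Nat.lt_or_ge d j with hdj | hdj
  · rw [mul_pow, mul_assoc, ← C_pow, ← smul_eq_C_mul, map_smul, smul_eq_mul]
    exact (pow_dvd_pow _ hdj).mul_right _
  · obtain ⟨i, rfl⟩ := Nat.exists_eq_add_of_le hdj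
    have : e + (j + i) - j = e + i := by omega
    rw [this, pow_add (map _ _), mul_left_comm, ← map_pow, extendFunctional_mul_eq_zero l _ (j + i) hl]
    · exact dvd_zero _
    · rw [mul_pow, map_linearForm, ← C_pow]
      have h2 := isHomogeneous_C (Fin (n + 1))
        ((Polynomial.X : Polynomial (MvPolynomial (Fin n) 𝕜)) ^ j)
      have h3 := (h2.mul (linearForm_pow_isHomogeneous (Fin.cons 0 fun i => Polynomial.C (X i)) j)).mul
        (linearForm_pow_isHomogeneous
          (fun i => algebraMap 𝕜 _ ((Fin.cons 1 a : Fin (n + 1) → 𝕜) i)) i)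
      rwa [zero_add] at h3

/-- The tangent space: every form of degree `e + d < k * (d + 1)` is a combination of the powers
`L_a ^ e`, `a` running over the grid, with `d`-forms as coefficients. -/
theorem spanning {𝕜 : Type*} [Field 𝕜] [CharZero 𝕜] {k : ℕ} (α : Fin k → 𝕜)
    (hα : Function.Injective α) (n d e : ℕ) (hlt : e + d < k * (d + 1))
    (f : MvPolynomial (Fin (n + 1)) 𝕜) (hf : f.IsHomogeneous (e + d)) :
    ∃ h : (Fin n → Fin k) → MvPolynomial (Fin (n + 1)) 𝕜, (∀ a, (h a).IsHomogeneous d) ∧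
      f = ∑ a, linearForm (Fin.cons 1 (α ∘ a)) ^ e * h a := by
  classical
  let Φ : ((Fin n → Fin k) → homogeneousSubmodule (Fin (n + 1)) 𝕜 d) →ₗ[𝕜]
      MvPolynomial (Fin (n + 1)) 𝕜 :=
    ∑ a, (LinearMap.mulLeft 𝕜 (linearForm (Fin.cons 1 (α ∘ a)) ^ e)) ∘ₗ
      (homogeneousSubmodule (Fin (n + 1)) 𝕜 d).subtype ∘ₗ LinearMap.proj a
  have hΦ : ∀ h, Φ h = ∑ a, linearForm (Fin.cons 1 (α ∘ a)) ^ e * (h a : MvPolynomial _ 𝕜) := by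
    intro h; simp [Φ]
  by_cases hmem : f ∈ LinearMap.range Φ
  · obtain ⟨h, rfl⟩ := hmem
    exact ⟨fun a => h a, fun a => (h a).2, hΦ h⟩
  exfalso
  obtain ⟨l, hlf, hl⟩ := Submodule.exists_le_ker_of_notMem hmem
  have h0 : dualPoly (fun γ => l (monomial γ 1)) (e + d) = 0 := by
    refine eq_zero_of_vanish_on_grid α hα n (d + 1) _
      ((dualPoly_totalDegree _ _).trans_lt hlt) fun a => ?_
    refine dualPoly_dvd l _ e d fun h hh => ?_
    have : linearForm (Fin.cons 1 (α ∘ a)) ^ e * h = Φ (Pi.single a ⟨h, hh⟩) := by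
      rw [hΦ, Finset.sum_eq_single a]
      · simp
      · intro b _ hb
        simp [Pi.single_eq_of_ne hb]
      · simp
    rw [this]
    exact hl ⟨_, rfl⟩
  refine hlf ?_
  rw [f.as_sum, map_sum]
  refine Finset.sum_eq_zero fun γ hγ => ?_
  have hdeg : γ.degree = e + d := by
    rw [Finsupp.degree_eq_weight_one]
    exact hf (mem_support_iff.1 hγ)
  have := eq_zero_of_dualPoly_eq_zero _ _ h0 γ hdeg
  rw [← mul_one (coeff γ f), ← smul_eq_mul, ← smul_monomial, map_smul, this, smul_zero]

/-! ### Differentiating polynomial-valued maps -/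

/-- The polynomial-valued map `P` has derivative `P'` at the origin, strictly and coefficient by
coefficient. This avoids choosing a norm on the space of polynomials. -/
def HasCoeffDeriv {σ 𝕜 E : Type*} [RCLike 𝕜] [NormedAddCommGroup E] [NormedSpace 𝕜 E]
    [FiniteDimensional 𝕜 E] (P : E → MvPolynomial σ 𝕜) (P' : E →ₗ[𝕜] MvPolynomial σ 𝕜) : Prop :=
  ∀ m, HasStrictFDerivAt (fun t => coeff m (P t))
    (LinearMap.toContinuousLinearMap (lcoeff 𝕜 m ∘ₗ P')) (0 : E)

section HasCoeffDeriv
variable {σ 𝕜 E : Type*} [RCLike 𝕜] [NormedAddCommGroup E] [NormedSpace 𝕜 E]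
    [FiniteDimensional 𝕜 E]

lemma hasCoeffDeriv_affine (p : MvPolynomial σ 𝕜) (A : E →ₗ[𝕜] MvPolynomial σ 𝕜) :
    HasCoeffDeriv (fun t => p + A t) A := fun m => by
  have := (LinearMap.toContinuousLinearMap (lcoeff 𝕜 m ∘ₗ A)).hasStrictFDerivAt (x := (0 : E))
  simpa using this.const_add (coeff m p)

lemma hasCoeffDeriv_mul {P Q : E → MvPolynomial σ 𝕜} {P' Q' : E →ₗ[𝕜] MvPolynomial σ 𝕜}
    (hP : HasCoeffDeriv P P') (hQ : HasCoeffDeriv Q Q') :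
    HasCoeffDeriv (fun t => P t * Q t)
      (LinearMap.mulLeft 𝕜 (P 0) ∘ₗ Q' + LinearMap.mulLeft 𝕜 (Q 0) ∘ₗ P') := fun m => by
  classical
  have := HasStrictFDerivAt.fun_sum (u := Finset.HasAntidiagonal.antidiagonal m)
    fun x _ => (hP x.1).mul (hQ x.2)
  simp only [coeff_mul]
  refine this.congr_fderiv ?_
  ext t
  simp [coeff_mul, Finset.sum_add_distrib]
  rw [← coeff_mul, mul_comm (Q 0), coeff_mul]
  exact Finset.sum_congr rfl fun _ _ => mul_comm _ _

lemma hasCoeffDeriv_pow {P : E → MvPolynomial σ 𝕜} {P' : E →ₗ[𝕜] MvPolynomial σ 𝕜}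
    (hP : HasCoeffDeriv P P') (k : ℕ) :
    HasCoeffDeriv (fun t => P t ^ (k + 1)) (LinearMap.mulLeft 𝕜 ((k + 1 : ℕ) * P 0 ^ k) ∘ₗ P') := by
  induction k with
  | zero =>
    convert hP using 1
    · simp
    · ext t : 1; simp
  | succ k ih =>
    convert hasCoeffDeriv_mul ih hP using 1
    · funext t; rw [pow_succ]
    · ext t : 1
      simp
      ring

lemma hasCoeffDeriv_sum {ι : Type*} [Fintype ι] {P : ι → E → MvPolynomial σ 𝕜}
    {P' : ι → E →ₗ[𝕜] MvPolynomial σ 𝕜} (hP : ∀ i, HasCoeffDeriv (P i) (P' i)) :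
    HasCoeffDeriv (fun t => ∑ i, P i t) (∑ i, P' i) := fun m => by
  have := HasStrictFDerivAt.fun_sum (u := Finset.univ) fun i _ => hP i m
  simp only [coeff_sum]
  refine this.congr_fderiv ?_
  ext t
  simp

end HasCoeffDeriv

/-! ### Open image and doubling -/

/-- Some nonzero multiple of `f` is a difference of two sums of `(k + 1) ^ n` powers with exponent
`k + 1`. -/
theorem core {𝕜 : Type*} [RCLike 𝕜] (k d n : ℕ) (f : MvPolynomial (Fin (n + 1)) 𝕜)
    (hf : f.IsHomogeneous ((k + 1) * d)) :
    ∃ (ε : 𝕜) (g h : (Fin n → Fin (k + 1)) → MvPolynomial (Fin (n + 1)) 𝕜), ε ≠ 0 ∧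
      (∀ a, (g a).IsHomogeneous d) ∧ (∀ a, (h a).IsHomogeneous d) ∧
      C ε * f = ∑ a, g a ^ (k + 1) - ∑ a, h a ^ (k + 1) := by
  classical
  let α : Fin (k + 1) → 𝕜 := fun i => ((i : ℕ) : 𝕜)
  have hα : Function.Injective α := fun i j h => Fin.ext (Nat.cast_injective h)
  have hD : (k + 1) * d = k * d + d := by ring
  let I := Finset.finsuppAntidiag (Finset.univ : Finset (Fin (n + 1))) ((k + 1) * d)
  have hI : ∀ γ, γ ∈ I ↔ γ.degree = (k + 1) * d := fun γ => by
    simp [I, Finset.mem_finsuppAntidiag, Finsupp.degree_eq_sum]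
  have hI' : ∀ p : MvPolynomial (Fin (n + 1)) 𝕜, p.IsHomogeneous ((k + 1) * d) →
      ∀ γ, γ ∉ I → coeff γ p = 0 := fun p hp γ hγ => by
    by_contra hc
    refine hγ ((hI γ).2 ?_)
    rw [Finsupp.degree_eq_weight_one]
    exact hp hc
  let L : (Fin n → Fin (k + 1)) → MvPolynomial (Fin (n + 1)) 𝕜 :=
    fun a => linearForm (Fin.cons 1 (α ∘ a))
  -- Directions `v γ` whose image under the derivative at `(L_a ^ d)` is the monomial `x^γ`.
  have hv : ∀ γ : I, ∃ v : (Fin n → Fin (k + 1)) → MvPolynomial (Fin (n + 1)) 𝕜,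
      (∀ a, (v a).IsHomogeneous d) ∧
      monomial γ.1 ((k + 1 : ℕ) : 𝕜)⁻¹ = ∑ a, L a ^ (k * d) * v a := fun γ => by
    refine spanning α hα n d (k * d) (by nlinarith) _ (isHomogeneous_monomial _ ?_)
    rw [← hD]
    exact (hI _).1 γ.2
  choose v hvd hv using hv
  let A : (Fin n → Fin (k + 1)) → (I → 𝕜) →ₗ[𝕜] MvPolynomial (Fin (n + 1)) 𝕜 :=
    fun a => ∑ γ, (LinearMap.proj γ).smulRight (v γ a)
  have hA : ∀ a t, A a t = ∑ γ, t γ • v γ a := fun a t => by simp [A]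
  have hAd : ∀ a t, (A a t).IsHomogeneous d := fun a t => by
    rw [hA]
    refine IsHomogeneous.sum _ _ _ fun γ _ => ?_
    exact (homogeneousSubmodule (Fin (n + 1)) 𝕜 d).smul_mem _ (hvd γ a)
  let P : (I → 𝕜) → (Fin n → Fin (k + 1)) → MvPolynomial (Fin (n + 1)) 𝕜 :=
    fun t a => L a ^ d + A a t
  have hPd : ∀ t a, (P t a).IsHomogeneous d := fun t a =>
    (linearForm_pow_isHomogeneous _ d).add (hAd a t)
  have hPk : ∀ t, (∑ a, P t a ^ (k + 1)).IsHomogeneous ((k + 1) * d) := fun t =>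
    IsHomogeneous.sum _ _ _ fun a _ => by simpa [mul_comm] using (hPd t a).pow (k + 1)
  let Ψ : (I → 𝕜) → (I → 𝕜) := fun t γ => coeff γ.1 (∑ a, P t a ^ (k + 1))
  have hder := hasCoeffDeriv_sum fun a => hasCoeffDeriv_pow (hasCoeffDeriv_affine (L a ^ d) (A a)) k
  -- In coordinates, `t ↦ ∑ (L_a ^ d + ∑ t_γ v_γ) ^ (k + 1)` has derivative the identity at `0`.
  have hΨ : HasStrictFDerivAt Ψ
      ((ContinuousLinearEquiv.refl 𝕜 (I → 𝕜) : (I → 𝕜) ≃L[𝕜] (I → 𝕜)) :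
        (I → 𝕜) →L[𝕜] (I → 𝕜)) 0 := by
    rw [hasStrictFDerivAt_pi']
    intro γ
    refine (hder γ.1).congr_fderiv ?_
    ext1 t
    have h1 : ∑ a, ((k + 1 : ℕ) : MvPolynomial (Fin (n + 1)) 𝕜) * (L a ^ d) ^ k * A a t =
        ∑ γ : I, monomial γ.1 (t γ) := by
      simp_rw [hA, Finset.mul_sum]
      rw [Finset.sum_comm]
      refine Finset.sum_congr rfl fun γ _ => ?_
      have h2 : monomial γ.1 (t γ) = (t γ * ((k + 1 : ℕ) : 𝕜)) •
          monomial γ.1 ((k + 1 : ℕ) : 𝕜)⁻¹ := by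
        rw [smul_monomial, smul_eq_mul, mul_assoc,
          mul_inv_cancel₀ (Nat.cast_ne_zero.2 k.succ_ne_zero), mul_one]
      rw [h2, hv, Finset.smul_sum]
      refine Finset.sum_congr rfl fun a _ => ?_
      rw [smul_eq_C_mul, smul_eq_C_mul, ← pow_mul, mul_comm d k, C_mul, ← C_eq_coe_nat]
      ring
    have h3 : coeff γ.1 (∑ γ : I, monomial γ.1 (t γ)) = t γ := by
      rw [coeff_sum, Finset.sum_eq_single γ]
      · simp
      · intro δ _ hne
        rw [coeff_monomial, if_neg fun h => hne (Subtype.ext h)]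
      · simp
    rw [← h1] at h3
    rw [coeff_sum] at h3
    simpa [mul_assoc] using h3
  have hnhds := hΨ.map_nhds_eq_of_equiv
  have hrange : Set.range Ψ ∈ nhds (Ψ 0) := by
    rw [← hnhds]; exact Filter.range_mem_map
  have hcont : Filter.Tendsto (fun ε : 𝕜 => Ψ 0 + ε • fun γ : I => coeff γ.1 f)
      (nhdsWithin 0 {0}ᶜ) (nhds (Ψ 0)) := by
    have : Continuous (fun ε : 𝕜 => Ψ 0 + ε • fun γ : I => coeff γ.1 f) := by fun_prop
    simpa using (this.tendsto 0).mono_left nhdsWithin_le_nhds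
  obtain ⟨ε, ⟨t, ht⟩, hε⟩ := ((hcont.eventually hrange).and self_mem_nhdsWithin).exists
  refine ⟨ε, P t, P 0, hε, hPd t, hPd 0, ?_⟩
  ext γ
  rw [coeff_C_mul, coeff_sub]
  by_cases hγ : γ ∈ I
  · have := congrFun ht ⟨γ, hγ⟩
    simp only [Ψ, Pi.add_apply, Pi.smul_apply, smul_eq_mul] at this
    rw [this]; ring
  · rw [hI' f hf γ hγ, hI' _ (hPk t) γ hγ, hI' _ (hPk 0) γ hγ]; ring

/-- Every form of degree `k * d` is a linear combination of `2 * k ^ n` `k`-th powers of `d`-forms. -/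
theorem combo {𝕜 : Type*} [RCLike 𝕜] (k d n : ℕ) (hk : 1 ≤ k)
    (f : MvPolynomial (Fin (n + 1)) 𝕜) (hf : f.IsHomogeneous (k * d)) :
    ∃ (c : Fin (2 * k ^ n) → 𝕜) (g : Fin (2 * k ^ n) → MvPolynomial (Fin (n + 1)) 𝕜),
      (∀ i, (g i).IsHomogeneous d) ∧ f = ∑ i, C (c i) * g i ^ k := by
  obtain ⟨k, rfl⟩ := Nat.exists_eq_add_of_le' hk
  obtain ⟨ε, g, h, hε, hg, hh, he⟩ := core k d n f hf
  have hcard : Fintype.card ((Fin n → Fin (k + 1)) ⊕ (Fin n → Fin (k + 1))) =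
      2 * (k + 1) ^ n := by
    simp [two_mul]
  let e := Fintype.equivFinOfCardEq hcard
  refine ⟨fun i => Sum.elim (fun _ => ε⁻¹) (fun _ => -ε⁻¹) (e.symm i),
    fun i => Sum.elim g h (e.symm i), fun i => ?_, ?_⟩
  · change (Sum.elim g h (e.symm i)).IsHomogeneous d
    rcases e.symm i with a | a
    exacts [hg a, hh a]
  · rw [e.symm.sum_comp fun x =>
      C (Sum.elim (fun _ => ε⁻¹) (fun _ => -ε⁻¹) x) * Sum.elim g h x ^ (k + 1),
      Fintype.sum_sum_type]
    simp only [Sum.elim_inl, Sum.elim_inr, C_neg, neg_mul, Finset.sum_neg_distrib,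
      ← Finset.mul_sum]
    rw [← sub_eq_add_neg, ← mul_sub, ← he, ← mul_assoc, ← C_mul, inv_mul_cancel₀ hε, C_1, one_mul]

/-- Every complex form of degree `kd` in `n+1` variables is a sum of
at most `2kⁿ` k-th powers of degree-`d` forms, and every real form of degree `kd` in
`n+1` variables is a real linear combination (possibly with negative coefficients) of at
most `2kⁿ` k-th powers of real degree-`d` forms. -/
theorem stmt_12 (k d : ℕ) (hk : 1 ≤ k) (hd : 1 ≤ d) (n : ℕ) :
    (∀ f : MvPolynomial (Fin (n + 1)) ℂ, f.IsHomogeneous (k * d) →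
      ∃ r ≤ 2 * k ^ n, ∃ g : Fin r → MvPolynomial (Fin (n + 1)) ℂ,
        (∀ i, (g i).IsHomogeneous d) ∧ f = ∑ i, g i ^ k) ∧
    (∀ f : MvPolynomial (Fin (n + 1)) ℝ, f.IsHomogeneous (k * d) →
      ∃ r ≤ 2 * k ^ n, ∃ (c : Fin r → ℝ) (g : Fin r → MvPolynomial (Fin (n + 1)) ℝ),
        (∀ i, (g i).IsHomogeneous d) ∧ f = ∑ i, C (c i) * g i ^ k) := by
  refine ⟨fun f hf => ?_, fun f hf => ⟨_, le_rfl, combo k d n hk f hf⟩⟩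
  obtain ⟨c, g, hg, rfl⟩ := combo k d n hk f hf
  -- The scalars are absorbed into the forms by extracting `k`-th roots.
  choose z hz using fun i =>
    IsAlgClosed.exists_pow_nat_eq (c i) hk
  refine ⟨_, le_rfl, fun i => C (z i) * g i, fun i => ?_, ?_⟩
  · simpa using (isHomogeneous_C _ (z i)).mul (hg i)
  · simp only [mul_pow, ← C_pow, hz]
end
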